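/- arXiv:1501.05388 — 2 statements merged into one kernel-verified Lean document; each statement's English description precedes it below -/
import Mathlib

section
/- Let p ≥ 1, let σ_1,…,σ_p be real numbers and λ_1,…,λ_p ≥ 0, and let q(x) = ∏_{k=1}^p Γ(x+λ_k)^{σ_k} for x > 0. Then q is logarithmically completely monotonic on (0,∞) if and only if Σ_{k=1}^p σ_k = 0 and v(t) = Σ_{k=1}^p σ_k t^{λ_k} ≥ 0 for all t ∈ (0,1]. -/
open MeasureTheory

/-- A function `f` is completely monotonic on `(0,∞)` if it is infinitely
differentiable there and `(-1)^n f^(n)(x) ≥ 0` for all `n ≥ 0` and `x > 0`. -/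
def CompletelyMonotonicOn (f : ℝ → ℝ) : Prop :=
  (∀ x > (0 : ℝ), ContDiffAt ℝ (⊤ : ℕ∞) f x) ∧
    ∀ (n : ℕ), ∀ x > (0 : ℝ), 0 ≤ (-1 : ℝ) ^ n * iteratedDeriv n f x

/-- A positive function `f` on `(0,∞)` is logarithmically completely monotonic
if `-(log f)'` is completely monotonic on `(0,∞)`. -/
def LogCompletelyMonotonic (f : ℝ → ℝ) : Prop :=
  (∀ x > (0 : ℝ), 0 < f x) ∧
    CompletelyMonotonicOn (fun x => -deriv (fun y => Real.log (f y)) x)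

/-!
Write `ψ = Γ'/Γ`, `f(x) = -(log q)'(x) = -∑ σ_k ψ(x + λ_k)` and `g(x) = ∑ σ_k / (x + λ_k)`.
The recurrence `ψ(x + 1) = ψ(x) + 1/x` reads `f(x) - f(x + 1) = g(x)`, so `g` is completely
monotonic when `f` is; conversely, when `f` vanishes at infinity, `f(x) = ∑ g(x + n)` is a
convergent sum of completely monotonic functions. Since `f + (∑ σ_k) ψ` tends to `0` while `ψ` is
unbounded, boundedness of `f` forces `∑ σ_k = 0`, and `∑ σ_k = 0` makes `f` vanish at infinity.
Finally, `g` is the Laplace transform of `u ↦ v(exp(-u))`, hence completely monotonic when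
`v ≥ 0` on `(0, 1]`, and Post's inversion formula recovers `v ≥ 0` from the derivatives of `g`.
-/

open Filter Topology Asymptotics
open scoped Nat

namespace CompletelyMonotonicOn

variable {f g : ℝ → ℝ} {a b c x : ℝ}

theorem congr (hf : CompletelyMonotonicOn f) (h : Set.EqOn f g (Set.Ioi 0)) :
    CompletelyMonotonicOn g := by
  have heq : ∀ x > 0, g =ᶠ[𝓝 x] f := fun x hx => h.symm.eventuallyEq_of_mem (Ioi_mem_nhds hx)
  refine ⟨fun x hx => (hf.1 x hx).congr_of_eventuallyEq (heq x hx), fun n x hx => ?_⟩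
  rw [(heq x hx).iteratedDeriv_eq]
  exact hf.2 n x hx

theorem nonneg (hf : CompletelyMonotonicOn f) (hx : 0 < x) : 0 ≤ f x := by
  simpa using hf.2 0 x hx

theorem hasDerivAt (hf : CompletelyMonotonicOn f) (hx : 0 < x) : HasDerivAt f (deriv f x) x :=
  ((hf.1 x hx).differentiableAt (by simp)).hasDerivAt

theorem neg_deriv (hf : CompletelyMonotonicOn f) : CompletelyMonotonicOn fun x => -deriv f x := by
  have hsmooth : ContDiffOn ℝ (⊤ : ℕ∞) f (Set.Ioi 0) := fun x hx => (hf.1 x hx).contDiffWithinAt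
  refine ⟨fun x hx => ?_, fun n x hx => ?_⟩
  · exact ((hsmooth.deriv_of_isOpen isOpen_Ioi (by simp)).contDiffAt (Ioi_mem_nhds hx)).neg
  · rw [iteratedDeriv_fun_neg, ← iteratedDeriv_succ']
    simpa only [pow_succ, mul_neg_one, mul_one, neg_mul, mul_neg] using hf.2 (n + 1) x hx

theorem antitoneOn (hf : CompletelyMonotonicOn f) : AntitoneOn f (Set.Ioi 0) := by
  refine antitoneOn_of_deriv_nonpos (convex_Ioi 0)
    (fun x hx => (hf.hasDerivAt hx).continuousAt.continuousWithinAt) ?_ ?_ <;> rw [interior_Ioi]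
  · exact fun x hx => (hf.hasDerivAt hx).differentiableAt.differentiableWithinAt
  · exact fun x hx => neg_nonneg.1 (hf.neg_deriv.nonneg hx)

theorem neg_deriv_le_div (hf : CompletelyMonotonicOn f) (ha : 0 < a) (hab : a < b) :
    -deriv f b ≤ f a / (b - a) := by
  have hpos : ∀ y ∈ Set.Icc a b, 0 < y := fun y hy => ha.trans_le hy.1
  have hslope : f b - f a ≤ deriv f b * (b - a) := by
    refine (convex_Icc a b).image_sub_le_mul_sub_of_deriv_le
      (fun y hy => (hf.hasDerivAt (hpos y hy)).continuousAt.continuousWithinAt)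
      (fun y hy => (hf.hasDerivAt (hpos y (interior_subset hy))).differentiableAt
        |>.differentiableWithinAt) (fun y hy => ?_)
      a (Set.left_mem_Icc.2 hab.le) b (Set.right_mem_Icc.2 hab.le) hab.le
    have hyb := interior_subset hy
    exact neg_le_neg_iff.1 (hf.neg_deriv.antitoneOn (hpos y hyb) (ha.trans hab) hyb.2)
  rw [le_div_iff₀ (sub_pos.2 hab)]
  linarith [hf.nonneg (ha.trans hab)]

theorem abs_deriv_le (hf : CompletelyMonotonicOn f) (ha : 0 < a) (hx : 2 * a < x) :
    |deriv f x| ≤ f a / a := by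
  rw [abs_of_nonpos (neg_nonneg.1 (hf.neg_deriv.nonneg (by linarith)))]
  refine (hf.neg_deriv_le_div ha (by linarith)).trans ?_
  gcongr
  · exact hf.nonneg ha
  · linarith

theorem coinduction {P : (ℝ → ℝ) → Prop} (nonneg : ∀ g, P g → ∀ x > 0, 0 ≤ g x)
    (step : ∀ g, P g → ∃ h, P h ∧ ∀ x > 0, HasDerivAt g (-h x) x) (hf : P f) :
    CompletelyMonotonicOn f := by
  have iterated : ∀ n, ∃ h, P h ∧ ∀ x > 0, iteratedDeriv n f x = (-1) ^ n * h x := by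
    intro n
    induction n with
    | zero => exact ⟨f, hf, fun x _ => by simp⟩
    | succ n ih =>
      obtain ⟨g, hg, hfg⟩ := ih
      obtain ⟨h, hh, hgh⟩ := step g hg
      refine ⟨h, hh, fun x hx => ?_⟩
      have heq : iteratedDeriv n f =ᶠ[𝓝 x] fun y => (-1) ^ n * g y := by
        filter_upwards [Ioi_mem_nhds hx] with y hy using hfg y hy
      rw [iteratedDeriv_succ, heq.deriv_eq, ((hgh x hx).const_mul _).deriv]
      ring
  constructor
  · have hsmooth : ContDiffOn ℝ (⊤ : ℕ∞) f (Set.Ioi 0) := by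
      refine contDiffOn_of_differentiableOn_deriv fun n _ => ?_
      obtain ⟨g, hg, hfg⟩ := iterated n
      obtain ⟨h, -, hgh⟩ := step g hg
      have hdiff : DifferentiableOn ℝ (fun x => (-1) ^ n * g x) (Set.Ioi 0) := fun x hx =>
        ((hgh x hx).const_mul _).differentiableAt.differentiableWithinAt
      exact hdiff.congr fun x hx => (iteratedDerivWithin_of_isOpen isOpen_Ioi hx).trans (hfg x hx)
    exact fun x hx => hsmooth.contDiffAt (Ioi_mem_nhds hx)
  · intro n x hx
    obtain ⟨g, hg, hfg⟩ := iterated n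
    rw [hfg x hx, ← mul_assoc, ← mul_pow, neg_one_mul, neg_neg, one_pow, one_mul]
    exact nonneg g hg x hx

theorem comp_add_const (hf : CompletelyMonotonicOn f) (hc : 0 ≤ c) :
    CompletelyMonotonicOn fun x => f (x + c) := by
  refine coinduction (P := fun g => ∃ h, CompletelyMonotonicOn h ∧ g = fun x => h (x + c))
    ?_ ?_ ⟨f, hf, rfl⟩
  · rintro _ ⟨h, hh, rfl⟩ x hx
    exact hh.nonneg (add_pos_of_pos_of_nonneg hx hc)
  · rintro _ ⟨h, hh, rfl⟩
    refine ⟨_, ⟨_, hh.neg_deriv, rfl⟩, fun x hx => ?_⟩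
    rw [neg_neg]
    exact (hh.hasDerivAt (add_pos_of_pos_of_nonneg hx hc)).comp_add_const x c

theorem sub_comp_add_const (hf : CompletelyMonotonicOn f) (hc : 0 ≤ c) :
    CompletelyMonotonicOn fun x => f x - f (x + c) := by
  refine coinduction (P := fun g => ∃ h, CompletelyMonotonicOn h ∧ g = fun x => h x - h (x + c))
    ?_ ?_ ⟨f, hf, rfl⟩
  · rintro _ ⟨h, hh, rfl⟩ x hx
    exact sub_nonneg.2 (hh.antitoneOn hx (add_pos_of_pos_of_nonneg hx hc)
      (le_add_of_nonneg_right hc))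
  · rintro _ ⟨h, hh, rfl⟩
    refine ⟨_, ⟨_, hh.neg_deriv, rfl⟩, fun x hx => ?_⟩
    refine ((hh.hasDerivAt hx).sub
      ((hh.hasDerivAt (add_pos_of_pos_of_nonneg hx hc)).comp_add_const x c)).congr_deriv ?_
    ring

section HasSum

variable {α : Type*} {F : α → ℝ → ℝ}

theorem summable_deriv (hF : ∀ i, CompletelyMonotonicOn (F i))
    (hsum : ∀ x > 0, Summable (F · x)) (hx : 0 < x) : Summable fun i => deriv (F i) x := by
  have ha : 0 < x / 3 := by positivity
  exact ((hsum _ ha).div_const _).of_norm_bounded fun i => (hF i).abs_deriv_le ha (by linarith)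

theorem hasDerivAt_tsum (hF : ∀ i, CompletelyMonotonicOn (F i))
    (hsum : ∀ x > 0, Summable (F · x)) (hx : 0 < x) :
    HasDerivAt (fun y => ∑' i, F i y) (∑' i, deriv (F i) x) x := by
  have ha : 0 < x / 3 := by positivity
  have hxt : x ∈ Set.Ioi (2 * (x / 3)) := by simp only [Set.mem_Ioi]; linarith
  refine hasDerivAt_tsum_of_isPreconnected ((hsum _ ha).div_const (x / 3))
    isOpen_Ioi isPreconnected_Ioi (fun i y hy => ?_) (fun i y hy => ?_) hxt (hsum x hx) hxt
  · exact (hF i).hasDerivAt ((by positivity : 0 < 2 * (x / 3)).trans hy)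
  · exact (hF i).abs_deriv_le ha hy

theorem of_hasSum (hF : ∀ i, CompletelyMonotonicOn (F i))
    (hf : ∀ x > 0, HasSum (F · x) (f x)) : CompletelyMonotonicOn f := by
  have htsum : CompletelyMonotonicOn fun x => ∑' i, F i x := by
    refine coinduction (P := fun g => ∃ G : α → ℝ → ℝ, (∀ i, CompletelyMonotonicOn (G i)) ∧
      (∀ x > 0, Summable (G · x)) ∧ g = fun x => ∑' i, G i x)
      ?_ ?_ ⟨F, hF, fun x hx => (hf x hx).summable, rfl⟩
    · rintro _ ⟨G, hG, -, rfl⟩ x hx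
      exact tsum_nonneg fun i => (hG i).nonneg hx
    · rintro _ ⟨G, hG, hsum, rfl⟩
      refine ⟨_, ⟨fun i x => -deriv (G i) x, fun i => (hG i).neg_deriv,
        fun x hx => (summable_deriv hG hsum hx).neg, rfl⟩, fun x hx => ?_⟩
      rw [tsum_neg, neg_neg]
      exact hasDerivAt_tsum hG hsum hx
  exact htsum.congr fun x hx => (hf x hx).tsum_eq

end HasSum

end CompletelyMonotonicOn

theorem iteratedDeriv_inv_add_const {𝕜 : Type*} [NontriviallyNormedField 𝕜] (n : ℕ) (c x : 𝕜) :
    iteratedDeriv n (fun y => (y + c)⁻¹) x = (-1) ^ n * n ! * ((x + c) ^ (n + 1))⁻¹ := by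
  have hexponent : (-1 - n : ℤ) = -((n + 1 : ℕ) : ℤ) := by push_cast; ring
  rw [congrFun (iteratedDeriv_comp_add_const n Inv.inv c) x, iteratedDeriv_eq_iterate,
    iter_deriv_inv, hexponent, zpow_neg, zpow_natCast]

section PoleSum

variable {ι : Type*} [Fintype ι] {σ lam : ι → ℝ} {u x : ℝ}

/-- The rational function `∑ σ_k / (x + λ_k)`, the increment of the logarithmic derivative of
`∏ Γ(x + λ_k) ^ σ_k` from `x` to `x + 1`. -/
noncomputable def poleSum (σ lam : ι → ℝ) (x : ℝ) : ℝ :=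
  ∑ k, σ k * (x + lam k)⁻¹

theorem contDiffAt_poleSum (hlam : ∀ k, 0 ≤ lam k) (hx : 0 < x) (n : WithTop ℕ∞) :
    ContDiffAt ℝ n (poleSum σ lam) x :=
  ContDiffAt.sum fun k _ => contDiffAt_const.mul
    ((contDiffAt_id.add contDiffAt_const).inv (add_pos_of_pos_of_nonneg hx (hlam k)).ne')

theorem neg_one_pow_mul_iteratedDeriv_poleSum (hlam : ∀ k, 0 ≤ lam k) (hx : 0 < x) (n : ℕ) :
    (-1) ^ n * iteratedDeriv n (poleSum σ lam) x = n ! * ∑ k, σ k * ((x + lam k) ^ (n + 1))⁻¹ := by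
  have hsmooth : ∀ k, ContDiffAt ℝ n (fun y => σ k * (y + lam k)⁻¹) x := fun k =>
    contDiffAt_const.mul
      ((contDiffAt_id.add contDiffAt_const).inv (add_pos_of_pos_of_nonneg hx (hlam k)).ne')
  have hsign : (-1 : ℝ) ^ n * (-1) ^ n = 1 := by rw [← mul_pow, neg_one_mul, neg_neg, one_pow]
  unfold poleSum
  rw [iteratedDeriv_fun_sum fun k _ => hsmooth k, Finset.mul_sum, Finset.mul_sum]
  refine Finset.sum_congr rfl fun k _ => ?_
  rw [iteratedDeriv_const_mul_field, iteratedDeriv_inv_add_const]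
  linear_combination (σ k * n ! * ((x + lam k) ^ (n + 1))⁻¹) * hsign

theorem integral_pow_mul_exp_neg_mul_Ioi (hx : 0 < x) (n : ℕ) :
    ∫ t in Set.Ioi (0 : ℝ), t ^ n * Real.exp (-(x * t)) = n ! * (x ^ (n + 1))⁻¹ := by
  have h := Real.integral_rpow_mul_exp_neg_mul_Ioi (a := n + 1) (by positivity) hx
  rw [Real.Gamma_nat_eq_factorial] at h
  simp only [add_sub_cancel_right, Real.rpow_natCast] at h
  rw [h, mul_comm, one_div, ← Nat.cast_succ, Real.rpow_natCast, inv_pow]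

theorem integrableOn_pow_mul_exp_neg_mul_Ioi (hx : 0 < x) (n : ℕ) :
    IntegrableOn (fun t : ℝ => t ^ n * Real.exp (-(x * t))) (Set.Ioi 0) :=
  .of_integral_ne_zero <| by rw [integral_pow_mul_exp_neg_mul_Ioi hx]; positivity

theorem factorial_mul_sum_inv_pow_eq_integral (hlam : ∀ k, 0 ≤ lam k) (hx : 0 < x) (n : ℕ) :
    n ! * ∑ k, σ k * ((x + lam k) ^ (n + 1))⁻¹ =
      ∫ t in Set.Ioi (0 : ℝ), t ^ n * Real.exp (-(x * t)) * ∑ k, σ k * Real.exp (-t) ^ lam k := by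
  have hpos : ∀ k, 0 < x + lam k := fun k => add_pos_of_pos_of_nonneg hx (hlam k)
  have hsplit : ∀ t : ℝ, t ^ n * Real.exp (-(x * t)) * ∑ k, σ k * Real.exp (-t) ^ lam k =
      ∑ k, σ k * (t ^ n * Real.exp (-((x + lam k) * t))) := by
    intro t
    rw [Finset.mul_sum]
    refine Finset.sum_congr rfl fun k _ => ?_
    rw [← Real.exp_mul, show -((x + lam k) * t) = -(x * t) + -t * lam k by ring, Real.exp_add]
    ring
  simp only [hsplit]
  rw [integral_finsetSum _ fun k _ =>
    (integrableOn_pow_mul_exp_neg_mul_Ioi (hpos k) n).const_mul _, Finset.mul_sum]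
  refine Finset.sum_congr rfl fun k _ => ?_
  rw [integral_const_mul, integral_pow_mul_exp_neg_mul_Ioi (hpos k), mul_left_comm]

/-- Post's inversion formula for the Laplace transform `poleSum σ lam` of
`u ↦ ∑ k, σ k * exp (-u) ^ lam k`. -/
theorem tendsto_pow_mul_sum_inv_pow (hu : 0 < u) :
    Tendsto (fun n : ℕ => ((n + 1) / u) ^ (n + 1) *
      ∑ k, σ k * (((n + 1) / u + lam k) ^ (n + 1))⁻¹) atTop
      (𝓝 (∑ k, σ k * Real.exp (-u) ^ lam k)) := by
  have hexp : ∀ k, Tendsto (fun n : ℕ => ((1 + lam k * u / (n + 1)) ^ (n + 1))⁻¹) atTop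
      (𝓝 (Real.exp (-u) ^ lam k)) := by
    intro k
    rw [← Real.exp_mul, neg_mul, Real.exp_neg, mul_comm u]
    have h := (Real.tendsto_one_add_div_pow_exp (lam k * u)).comp (tendsto_add_atTop_nat 1)
    simpa only [Function.comp_def, Nat.cast_add, Nat.cast_one] using h.inv₀ (Real.exp_pos _).ne'
  refine (tendsto_finsetSum Finset.univ fun k _ => (hexp k).const_mul (σ k)).congr fun n => ?_
  rw [Finset.mul_sum]
  refine Finset.sum_congr rfl fun k _ => ?_
  have hfactor : ((n : ℝ) + 1) / u + lam k = (n + 1) / u * (1 + lam k * u / (n + 1)) := by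
    field_simp
  have hx : ((n : ℝ) + 1) / u ≠ 0 := by positivity
  rw [hfactor, mul_pow, mul_inv, mul_left_comm, mul_inv_cancel_left₀ (pow_ne_zero _ hx)]

theorem sum_mul_rpow_nonneg_of_completelyMonotonicOn_poleSum (hlam : ∀ k, 0 ≤ lam k)
    (h : CompletelyMonotonicOn (poleSum σ lam)) {t : ℝ} (ht : t ∈ Set.Ioo (0 : ℝ) 1) :
    0 ≤ ∑ k, σ k * t ^ lam k := by
  have hu : 0 < -Real.log t := neg_pos.2 (Real.log_neg ht.1 ht.2)
  have hlim := tendsto_pow_mul_sum_inv_pow (σ := σ) (lam := lam) hu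
  rw [neg_neg, Real.exp_log ht.1] at hlim
  refine ge_of_tendsto' hlim fun n => ?_
  have hx : 0 < ((n : ℝ) + 1) / -Real.log t := div_pos n.cast_add_one_pos hu
  have hderiv := h.2 n _ hx
  rw [neg_one_pow_mul_iteratedDeriv_poleSum hlam hx] at hderiv
  exact mul_nonneg (pow_pos hx _).le
    (nonneg_of_mul_nonneg_right hderiv (Nat.cast_pos.2 n.factorial_pos))

theorem completelyMonotonicOn_poleSum (hlam : ∀ k, 0 ≤ lam k)
    (hv : ∀ t ∈ Set.Ioo (0 : ℝ) 1, 0 ≤ ∑ k, σ k * t ^ lam k) :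
    CompletelyMonotonicOn (poleSum σ lam) := by
  refine ⟨fun x hx => contDiffAt_poleSum hlam hx _, fun n x hx => ?_⟩
  rw [neg_one_pow_mul_iteratedDeriv_poleSum hlam hx,
    factorial_mul_sum_inv_pow_eq_integral hlam hx]
  refine setIntegral_nonneg measurableSet_Ioi fun t (ht : 0 < t) => ?_
  have hvt := hv (Real.exp (-t)) ⟨Real.exp_pos _, Real.exp_lt_one_iff.2 (neg_lt_zero.2 ht)⟩
  positivity

theorem completelyMonotonicOn_poleSum_iff (hlam : ∀ k, 0 ≤ lam k) :
    CompletelyMonotonicOn (poleSum σ lam) ↔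
      ∀ t ∈ Set.Ioc (0 : ℝ) 1, 0 ≤ ∑ k, σ k * t ^ lam k := by
  refine ⟨?_, fun hv => completelyMonotonicOn_poleSum hlam fun t ht => hv t ⟨ht.1, ht.2.le⟩⟩
  rintro h t ⟨ht0, ht1⟩
  rcases ht1.lt_or_eq with ht1 | rfl
  · exact sum_mul_rpow_nonneg_of_completelyMonotonicOn_poleSum hlam h ⟨ht0, ht1⟩
  · have hcont : ContinuousAt (fun t : ℝ => ∑ k, σ k * t ^ lam k) 1 :=
      tendsto_finsetSum _ fun k _ =>
        (Real.continuousAt_rpow_const 1 (lam k) (Or.inl one_ne_zero)).const_mul (σ k)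
    refine ge_of_tendsto (hcont.tendsto.mono_left nhdsWithin_le_nhds : Tendsto _ (𝓝[<] (1 : ℝ)) _)
      ?_
    filter_upwards [Ioo_mem_nhdsLT one_pos] with t ht
      using sum_mul_rpow_nonneg_of_completelyMonotonicOn_poleSum hlam h ht

end PoleSum

section Digamma

variable {x : ℝ}

/-- The digamma function `Γ'/Γ` on the real line. -/
noncomputable def realDigamma : ℝ → ℝ :=
  logDeriv Real.Gamma

theorem hasDerivAt_log_Gamma (hx : 0 < x) :
    HasDerivAt (fun y => Real.log (Real.Gamma y)) (realDigamma x) x :=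
  (Real.differentiableAt_Gamma fun m => ((neg_nonpos.2 m.cast_nonneg).trans_lt hx).ne'
    ).hasDerivAt.log (Real.Gamma_pos_of_pos hx).ne'

theorem monotoneOn_realDigamma : MonotoneOn realDigamma (Set.Ioi 0) :=
  (Real.convexOn_log_Gamma.monotoneOn_deriv fun _ hx =>
    (hasDerivAt_log_Gamma hx).differentiableAt).congr fun _ hx => (hasDerivAt_log_Gamma hx).deriv

theorem realDigamma_add_one (hx : 0 < x) : realDigamma (x + 1) = realDigamma x + x⁻¹ := by
  have hshift := (hasDerivAt_log_Gamma (by positivity : 0 < x + 1)).comp_add_const x 1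
  refine hshift.unique (((hasDerivAt_log_Gamma hx).add (Real.hasDerivAt_log hx.ne')
    ).congr_of_eventuallyEq ?_)
  filter_upwards [Ioi_mem_nhds hx] with y (hy : 0 < y)
  rw [Real.Gamma_add_one hy.ne', Real.log_mul hy.ne' (Real.Gamma_pos_of_pos hy).ne', add_comm]
  rfl

theorem realDigamma_natCast_add_one (n : ℕ) :
    realDigamma (n + 1) = -Real.eulerMascheroniConstant + harmonic n := by
  rw [realDigamma, logDeriv_apply, Real.deriv_Gamma_nat, Real.Gamma_nat_eq_factorial,
    mul_div_cancel_left₀ _ (by positivity)]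

theorem tendsto_realDigamma_natCast_add_one :
    Tendsto (fun n : ℕ => realDigamma (n + 1)) atTop atTop := by
  simp only [realDigamma_natCast_add_one]
  refine tendsto_atTop_add_const_left _ _ (tendsto_atTop_mono log_add_one_le_harmonic ?_)
  exact Real.tendsto_log_atTop.comp (tendsto_natCast_atTop_atTop.comp (tendsto_add_atTop_nat 1))

theorem realDigamma_add_natCast_le (hx : 0 < x) (n : ℕ) :
    realDigamma (x + n) ≤ realDigamma x + n * x⁻¹ := by
  induction n with
  | zero => simp
  | succ n ih =>
    have hinv : (x + n)⁻¹ ≤ x⁻¹ := inv_anti₀ hx (le_add_of_nonneg_right n.cast_nonneg)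
    rw [Nat.cast_succ, ← add_assoc, realDigamma_add_one (by positivity)]
    linarith

theorem tendsto_realDigamma_add_sub {c : ℝ} (hc : 0 ≤ c) :
    Tendsto (fun x => realDigamma (x + c) - realDigamma x) atTop (𝓝 0) := by
  obtain ⟨n, hn⟩ := exists_nat_ge c
  have hupper : Tendsto (fun x : ℝ => (n : ℝ) * x⁻¹) atTop (𝓝 0) := by
    simpa using tendsto_inv_atTop_zero.const_mul (n : ℝ)
  refine tendsto_of_tendsto_of_tendsto_of_le_of_le' tendsto_const_nhds hupper ?_ ?_
  all_goals
    filter_upwards [eventually_gt_atTop 0] with x hx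
    have hxc : 0 < x + c := add_pos_of_pos_of_nonneg hx hc
  · exact sub_nonneg.2 (monotoneOn_realDigamma hx hxc (le_add_of_nonneg_right hc))
  · have hmono : realDigamma (x + c) ≤ realDigamma (x + n) :=
      monotoneOn_realDigamma hxc (add_pos_of_pos_of_nonneg hx n.cast_nonneg) (by gcongr)
    linarith [realDigamma_add_natCast_le hx n]

end Digamma

section DigammaSum

variable {ι : Type*} [Fintype ι] {σ lam : ι → ℝ} {x : ℝ}

/-- The function `∑ σ_k ψ(x + λ_k)`, where `ψ` is the digamma function: the logarithmic derivative
of `∏ Γ(x + λ_k) ^ σ_k`. -/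
noncomputable def digammaSum (σ lam : ι → ℝ) (x : ℝ) : ℝ :=
  ∑ k, σ k * realDigamma (x + lam k)

theorem prod_Gamma_rpow_pos (hlam : ∀ k, 0 ≤ lam k) (hx : 0 < x) :
    0 < ∏ k, Real.Gamma (x + lam k) ^ σ k :=
  Finset.prod_pos fun k _ => Real.rpow_pos_of_pos
    (Real.Gamma_pos_of_pos (add_pos_of_pos_of_nonneg hx (hlam k))) _

theorem log_prod_Gamma_rpow (hlam : ∀ k, 0 ≤ lam k) (hx : 0 < x) :
    Real.log (∏ k, Real.Gamma (x + lam k) ^ σ k) =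
      ∑ k, σ k * Real.log (Real.Gamma (x + lam k)) := by
  have hpos : ∀ k, 0 < Real.Gamma (x + lam k) := fun k =>
    Real.Gamma_pos_of_pos (add_pos_of_pos_of_nonneg hx (hlam k))
  rw [Real.log_prod fun k _ => (Real.rpow_pos_of_pos (hpos k) _).ne']
  exact Finset.sum_congr rfl fun k _ => Real.log_rpow (hpos k) _

theorem deriv_log_prod_Gamma_rpow (hlam : ∀ k, 0 ≤ lam k) (hx : 0 < x) :
    deriv (fun y => Real.log (∏ k, Real.Gamma (y + lam k) ^ σ k)) x = digammaSum σ lam x := by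
  have heq : (fun y => Real.log (∏ k, Real.Gamma (y + lam k) ^ σ k)) =ᶠ[𝓝 x]
      fun y => ∑ k, σ k * Real.log (Real.Gamma (y + lam k)) := by
    filter_upwards [Ioi_mem_nhds hx] with y hy using log_prod_Gamma_rpow hlam hy
  rw [heq.deriv_eq]
  exact (HasDerivAt.fun_sum fun k _ => ((hasDerivAt_log_Gamma
    (add_pos_of_pos_of_nonneg hx (hlam k))).comp_add_const x (lam k)).const_mul _).deriv

theorem logCompletelyMonotonic_prod_Gamma_rpow_iff (hlam : ∀ k, 0 ≤ lam k) :
    LogCompletelyMonotonic (fun x => ∏ k, Real.Gamma (x + lam k) ^ σ k) ↔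
      CompletelyMonotonicOn fun x => -digammaSum σ lam x := by
  have heq : Set.EqOn (fun x => -deriv (fun y => Real.log (∏ k, Real.Gamma (y + lam k) ^ σ k)) x)
      (fun x => -digammaSum σ lam x) (Set.Ioi 0) := fun x hx =>
    congrArg Neg.neg (deriv_log_prod_Gamma_rpow hlam hx)
  exact ⟨fun h => h.2.congr heq,
    fun h => ⟨fun x hx => prod_Gamma_rpow_pos hlam hx, h.congr heq.symm⟩⟩

theorem digammaSum_add_one (hlam : ∀ k, 0 ≤ lam k) (hx : 0 < x) :
    digammaSum σ lam (x + 1) = digammaSum σ lam x + poleSum σ lam x := by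
  simp only [digammaSum, poleSum, ← Finset.sum_add_distrib, ← mul_add]
  refine Finset.sum_congr rfl fun k _ => ?_
  rw [add_right_comm, realDigamma_add_one (add_pos_of_pos_of_nonneg hx (hlam k))]

theorem tendsto_digammaSum_sub (hlam : ∀ k, 0 ≤ lam k) :
    Tendsto (fun x => digammaSum σ lam x - (∑ k, σ k) * realDigamma x) atTop (𝓝 0) := by
  have h := tendsto_finsetSum Finset.univ fun k _ =>
    (tendsto_realDigamma_add_sub (hlam k)).const_mul (σ k)
  simpa only [digammaSum, Finset.sum_mul, ← Finset.sum_sub_distrib, ← mul_sub, mul_zero,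
    Finset.sum_const_zero] using h

theorem hasSum_poleSum (hlam : ∀ k, 0 ≤ lam k) (hσ : ∑ k, σ k = 0)
    (hg : ∀ x > 0, 0 ≤ poleSum σ lam x) (hx : 0 < x) :
    HasSum (fun n : ℕ => poleSum σ lam (x + n)) (-digammaSum σ lam x) := by
  have hlim : Tendsto (digammaSum σ lam) atTop (𝓝 0) := by
    simpa only [hσ, zero_mul, sub_zero] using tendsto_digammaSum_sub (σ := σ) hlam
  have htelescope : ∀ N : ℕ, ∑ n ∈ Finset.range N, poleSum σ lam (x + n) =
      digammaSum σ lam (x + N) - digammaSum σ lam x := by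
    intro N
    induction N with
    | zero => simp
    | succ N ih =>
      rw [Finset.sum_range_succ, ih, Nat.cast_succ, ← add_assoc,
        digammaSum_add_one hlam (by positivity)]
      ring
  rw [hasSum_iff_tendsto_nat_of_nonneg fun n => hg _ (by positivity)]
  simp only [htelescope]
  simpa using (hlim.comp (tendsto_atTop_add_const_left _ x
    tendsto_natCast_atTop_atTop)).sub_const (digammaSum σ lam x)

theorem sum_eq_zero_of_completelyMonotonicOn_neg_digammaSum (hlam : ∀ k, 0 ≤ lam k)
    (h : CompletelyMonotonicOn fun x => -digammaSum σ lam x) : ∑ k, σ k = 0 := by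
  have hbounded : (fun n : ℕ => digammaSum σ lam (n + 1)) =O[atTop] fun _ => (1 : ℝ) := by
    refine .of_bound (-digammaSum σ lam 1) (.of_forall fun n => ?_)
    have hn : (0 : ℝ) < n + 1 := by positivity
    rw [norm_one, mul_one, Real.norm_of_nonpos (neg_nonneg.1 (h.nonneg hn))]
    exact h.antitoneOn (Set.mem_Ioi.2 one_pos) hn (by simp)
  have hremainder := ((tendsto_digammaSum_sub (σ := σ) hlam).comp
    (tendsto_atTop_add_const_right _ 1 tendsto_natCast_atTop_atTop)).isBigO_one ℝ
  by_contra hσ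
  have hdigamma : (fun n : ℕ => realDigamma (n + 1)) =O[atTop] fun _ => (1 : ℝ) :=
    (isBigO_const_mul_left_iff hσ).1 (by simpa using hbounded.sub hremainder)
  exact not_isBoundedUnder_of_tendsto_atTop
    (tendsto_norm_atTop_atTop.comp tendsto_realDigamma_natCast_add_one)
    ((isBigO_one_iff ℝ).1 hdigamma)

theorem completelyMonotonicOn_neg_digammaSum_iff (hlam : ∀ k, 0 ≤ lam k) :
    CompletelyMonotonicOn (fun x => -digammaSum σ lam x) ↔
      ∑ k, σ k = 0 ∧ CompletelyMonotonicOn (poleSum σ lam) := by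
  constructor
  · intro h
    refine ⟨sum_eq_zero_of_completelyMonotonicOn_neg_digammaSum hlam h,
      (h.sub_comp_add_const zero_le_one).congr fun x hx => ?_⟩
    simp only [digammaSum_add_one hlam hx]
    ring
  · rintro ⟨hσ, h⟩
    exact .of_hasSum (fun n : ℕ => h.comp_add_const n.cast_nonneg)
      fun x hx => hasSum_poleSum hlam hσ (fun _ => h.nonneg) hx

end DigammaSum

theorem stmt1 (p : ℕ) (hp : 1 ≤ p) (σ lam : Fin p → ℝ) (hlam : ∀ k, 0 ≤ lam k) :
    LogCompletelyMonotonic (fun x => ∏ k, Real.Gamma (x + lam k) ^ (σ k)) ↔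
      ((∑ k, σ k = 0) ∧ ∀ t ∈ Set.Ioc (0 : ℝ) 1, 0 ≤ ∑ k, σ k * t ^ lam k) := by
  rw [logCompletelyMonotonic_prod_Gamma_rpow_iff hlam,
    completelyMonotonicOn_neg_digammaSum_iff hlam, completelyMonotonicOn_poleSum_iff hlam]
end

section
/- Let p ≥ 1 and let a_1,…,a_p, b_1,…,b_p be nonnegative reals with μ = Σ_{k=1}^p (b_k − a_k) > 0. For 0 < x < 1 let G(x) denote Meijer's G-function G^{p,0}_{p,p}(x | b ; a) defined as G(x) = lim_{R→∞} (1/(2π)) ∫_{−R}^{R} [∏_{k=1}^p Γ(a_k + c + it) / ∏_{k=1}^p Γ(b_k + c + it)] · x^{−(c+it)} dt, where c > −min_k a_k is arbitrary (the value is real and independent of c). Then for every 0 < x < 1, log(1/x) · G(x) = ∫_x^1 G(t) · [Σ_{k=1}^p ((x/t)^{a_k} − (x/t)^{b_k})] / (t − x) dt. -/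
open MeasureTheory Filter

/-!
Let `F(s) = ∏ Γ(s + a_k) / ∏ Γ(s + b_k)`, so that `2π G(e^{-w})` is the inversion integral `g(w)` of
`F(s) e^{sw}` along a vertical line. Gauss's formula `ψ(s + a) - ψ(s) = ∫₀^∞ (1 - e^{-av}) /
(1 - e^{-v}) e^{-sv} dv` shows that `F' = -(Lφ) F`, where `Lφ` is the Laplace transform of
`φ(v) = ∑ (e^{-a_k v} - e^{-b_k v}) / (1 - e^{-v})`. Integrating by parts in the inversion integral,
`w g(w)` is the inversion of `-F'`, hence the convolution `∫₀^w φ(v) g(w - v) dv`; the substitution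
`t = x e^v` with `w = log (1 / x)` turns this into the theorem.

The integrals converge only conditionally, since `F` decays like `|s|^{-μ}` with a possibly small
`μ`. The convolution is therefore taken before the limit `R → ∞`, with the uniform bound
`O(|w|^{ν-1})`, `ν = min (μ, 1/2)`, for the truncated inversion integrals as dominating function;
letting the line of integration tend to `re s = ∞` shows that they vanish in the limit for `w < 0`.
-/

section

open Complex Set
open scoped Topology

theorem abs_log_one_add_sub_le {δ y : ℝ} (hδ : 0 < δ) (hy : δ ≤ 1 + y) :
    |Real.log (1 + y) - y| ≤ y ^ 2 / δ := by
  have hpos : 0 < 1 + y := hδ.trans_le hy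
  have hupper := Real.log_le_sub_one_of_pos hpos
  have hlower := Real.one_sub_inv_le_log_of_pos hpos
  have hsq : 1 - (1 + y)⁻¹ - y = -(y ^ 2 / (1 + y)) := by field_simp; ring
  have hmono : y ^ 2 / (1 + y) ≤ y ^ 2 / δ := by gcongr
  have hnonneg : 0 ≤ y ^ 2 / δ := by positivity
  exact abs_le.2 ⟨by linarith, by linarith [hnonneg]⟩

section ShiftedNorms

variable {a c : ℝ}

theorem ne_zero_of_pos_le_re (hc : 0 < c) {z : ℂ} (hz : c ≤ z.re) : z ≠ 0 := by
  rintro rfl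
  exact absurd hz (by simpa using hc)

theorem le_norm_of_le_re {z : ℂ} (hz : c ≤ z.re) : c ≤ ‖z‖ :=
  hz.trans (re_le_norm z)

theorem norm_le_mul_norm_add_ofReal (hca : 0 < c + a) {z : ℂ} (hz : c ≤ z.re) :
    ‖z‖ ≤ (1 + |a| / (c + a)) * ‖z + a‖ := by
  have hre : c + a ≤ ‖z + a‖ := le_norm_of_le_re (by simpa using hz)
  calc ‖z‖ = ‖(z + a) - a‖ := by simp
    _ ≤ ‖z + a‖ + |a| := (norm_sub_le _ _).trans_eq (by simp)
    _ = ‖z + a‖ + |a| / (c + a) * (c + a) := by field_simp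
    _ ≤ ‖z + a‖ + |a| / (c + a) * ‖z + a‖ := by gcongr
    _ = (1 + |a| / (c + a)) * ‖z + a‖ := by ring

theorem norm_add_ofReal_sq (z : ℂ) (a : ℝ) :
    ‖z + a‖ ^ 2 = ‖z‖ ^ 2 + (2 * a * z.re + a ^ 2) := by
  simp only [Complex.sq_norm, normSq_apply, add_re, add_im, ofReal_re, ofReal_im]
  ring

theorem abs_two_mul_re_add_sq_le (a : ℝ) (hc : 0 < c) {z : ℂ} (hz : c ≤ z.re) :
    |2 * a * z.re + a ^ 2| ≤ (2 * |a| + a ^ 2 / c) * ‖z‖ := by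
  calc |2 * a * z.re + a ^ 2| ≤ |2 * a * z.re| + |a ^ 2| := abs_add_le _ _
    _ = 2 * |a| * |z.re| + a ^ 2 / c * c := by
      rw [abs_mul, abs_mul, abs_two, abs_sq, div_mul_cancel₀ _ hc.ne']
    _ ≤ 2 * |a| * ‖z‖ + a ^ 2 / c * ‖z‖ := by
      gcongr
      exacts [abs_re_le_norm z, le_norm_of_le_re hz]
    _ = (2 * |a| + a ^ 2 / c) * ‖z‖ := by ring

theorem one_add_two_mul_re_add_sq_div {z : ℂ} (hz : z ≠ 0) (a : ℝ) :
    1 + (2 * a * z.re + a ^ 2) / ‖z‖ ^ 2 = (‖z + a‖ / ‖z‖) ^ 2 := by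
  have hz0 := norm_ne_zero_iff.2 hz
  rw [div_pow, norm_add_ofReal_sq]
  field_simp

theorem log_norm_add_sub_eq {z : ℂ} (hz : z ≠ 0) (hza : z + a ≠ 0) {y : ℝ}
    (hy : y = (2 * a * z.re + a ^ 2) / ‖z‖ ^ 2) :
    Real.log ‖z + a‖ - Real.log ‖z‖ - a * (z⁻¹).re
      = ((Real.log (1 + y) - y) + a ^ 2 / ‖z‖ ^ 2) / 2 := by
  rw [hy, one_add_two_mul_re_add_sq_div hz, Real.log_pow,
    Real.log_div (norm_ne_zero_iff.2 hza) (norm_ne_zero_iff.2 hz), Nat.cast_ofNat, inv_re,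
    normSq_eq_norm_sq]
  ring

theorem exists_abs_log_norm_add_sub_le (hc : 0 < c) (hca : 0 < c + a) :
    ∃ K, 0 ≤ K ∧ ∀ z : ℂ, c ≤ z.re →
      |Real.log ‖z + a‖ - Real.log ‖z‖ - a * (z⁻¹).re| ≤ K / ‖z‖ ^ 2 := by
  set M := 1 + |a| / (c + a)
  have hM : 0 < M := by positivity
  refine ⟨((2 * |a| + a ^ 2 / c) ^ 2 * M ^ 2 + a ^ 2) / 2, by positivity, fun z hz ↦ ?_⟩
  have hz0 : z ≠ 0 := ne_zero_of_pos_le_re hc hz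
  have hza : z + a ≠ 0 := ne_zero_of_pos_le_re hca (by simpa using hz)
  have hnorm : 0 < ‖z‖ := norm_pos_iff.2 hz0
  set y := (2 * a * z.re + a ^ 2) / ‖z‖ ^ 2 with hy
  have hy_lower : (M ^ 2)⁻¹ ≤ 1 + y := by
    have h := norm_le_mul_norm_add_ofReal hca hz
    rw [hy, one_add_two_mul_re_add_sq_div hz0, ← inv_pow]
    gcongr
    rwa [inv_le_iff_one_le_mul₀ hM, div_mul_eq_mul_div, one_le_div hnorm, mul_comm]
  have hy_sq : y ^ 2 ≤ (2 * |a| + a ^ 2 / c) ^ 2 / ‖z‖ ^ 2 := by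
    rw [← sq_abs y, ← div_pow]
    gcongr
    rw [hy, abs_div, abs_of_nonneg (sq_nonneg ‖z‖), div_le_div_iff₀ (by positivity) hnorm]
    calc _ ≤ (2 * |a| + a ^ 2 / c) * ‖z‖ * ‖z‖ := by
          gcongr
          exact abs_two_mul_re_add_sq_le a hc hz
      _ = _ := by ring
  calc _ = |(Real.log (1 + y) - y) + a ^ 2 / ‖z‖ ^ 2| / 2 := by
        rw [log_norm_add_sub_eq hz0 hza hy, abs_div, abs_two]
    _ ≤ (|Real.log (1 + y) - y| + a ^ 2 / ‖z‖ ^ 2) / 2 := by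
      gcongr
      exact (abs_add_le _ _).trans_eq (by rw [abs_of_nonneg (by positivity : 0 ≤ a ^ 2 / _)])
    _ ≤ (y ^ 2 / (M ^ 2)⁻¹ + a ^ 2 / ‖z‖ ^ 2) / 2 := by
      gcongr
      exact abs_log_one_add_sub_le (by positivity) hy_lower
    _ ≤ ((2 * |a| + a ^ 2 / c) ^ 2 / ‖z‖ ^ 2 / (M ^ 2)⁻¹ + a ^ 2 / ‖z‖ ^ 2) / 2 := by gcongr
    _ = _ := by rw [div_inv_eq_mul]; ring

theorem norm_le_norm_add_natCast {s : ℂ} (hs : 0 ≤ s.re) (j : ℕ) : ‖s‖ ≤ ‖s + j‖ := by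
  have h := norm_add_ofReal_sq s j
  rw [ofReal_natCast] at h
  refine le_of_sq_le_sq ?_ (norm_nonneg _)
  rw [h]
  exact le_add_of_nonneg_right (by positivity)

theorem sum_inv_norm_add_natCast_sq_le (hc : 0 < c) {s : ℂ} (hs : c ≤ s.re) (n : ℕ) :
    ∑ j ∈ Finset.range n, (‖s + j‖ ^ 2)⁻¹ ≤ 4 * (1 + 1 / c) / ‖s‖ := by
  have hcs : c ≤ ‖s‖ := le_norm_of_le_re hs
  have hs0 : 0 < ‖s‖ := hc.trans_le hcs
  have hterm (j : ℕ) : (‖s + j‖ ^ 2)⁻¹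
      ≤ 4 * (1 + 1 / c) * ((‖s‖ + j)⁻¹ - (‖s‖ + (j + 1 : ℕ))⁻¹) := by
    have hj : (j : ℝ) ≤ ‖s + j‖ := le_norm_of_le_re (by simpa using hc.le.trans hs)
    have hnorm : (‖s‖ + j) / 2 ≤ ‖s + j‖ := by
      linarith [norm_le_norm_add_natCast (hc.le.trans hs) j]
    have hratio : (‖s‖ + j + 1) / (‖s‖ + j) ≤ 1 + 1 / c := by
      rw [add_div, div_self (by positivity)]
      gcongr
      linarith [(Nat.cast_nonneg j : (0 : ℝ) ≤ j)]
    calc (‖s + j‖ ^ 2)⁻¹ ≤ (((‖s‖ + j) / 2) ^ 2)⁻¹ := by gcongr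
      _ = 4 * ((‖s‖ + j + 1) / (‖s‖ + j)) * ((‖s‖ + j)⁻¹ - (‖s‖ + (j + 1 : ℕ))⁻¹) := by
        push_cast
        field_simp
        ring
      _ ≤ _ := by
        gcongr
        rw [sub_nonneg]
        gcongr
        simp
  calc _ ≤ ∑ j ∈ Finset.range n,
        4 * (1 + 1 / c) * ((‖s‖ + j)⁻¹ - (‖s‖ + (j + 1 : ℕ))⁻¹) :=
        Finset.sum_le_sum fun j _ ↦ hterm j
    _ = 4 * (1 + 1 / c) * (‖s‖⁻¹ - (‖s‖ + n)⁻¹) := by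
      rw [← Finset.mul_sum, Finset.sum_range_sub' fun j : ℕ ↦ (‖s‖ + (j : ℝ))⁻¹, Nat.cast_zero,
        add_zero]
    _ ≤ 4 * (1 + 1 / c) * ‖s‖⁻¹ := by
      gcongr
      exact sub_le_self _ (by positivity)

end ShiftedNorms

section GammaGrowth

variable {a c : ℝ}

theorem log_norm_GammaSeq {s : ℂ} (hs : 0 < s.re) {n : ℕ} (hn : n ≠ 0) :
    Real.log ‖GammaSeq s n‖ = s.re * Real.log n + Real.log n.factorial
      - ∑ j ∈ Finset.range (n + 1), Real.log ‖s + j‖ := by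
  have hn0 : 0 < n := Nat.pos_of_ne_zero hn
  have hne (j : ℕ) : ‖s + j‖ ≠ 0 := norm_ne_zero_iff.2 (ne_zero_of_pos_le_re hs (by simp))
  have hpow : (n : ℝ) ^ s.re ≠ 0 := by positivity
  have hfact : (n.factorial : ℝ) ≠ 0 := by positivity
  rw [GammaSeq, norm_div, norm_mul, norm_natCast_cpow_of_pos hn0, norm_natCast, norm_prod,
    Real.log_div (mul_ne_zero hpow hfact) (Finset.prod_ne_zero_iff.2 fun j _ ↦ hne j),
    Real.log_mul hpow hfact, Real.log_rpow (by positivity), Real.log_prod fun j _ ↦ hne j]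

theorem exists_abs_log_norm_add_sub_mul_le (hc : 0 < c) (hca : 0 < c + a) :
    ∃ K, 0 ≤ K ∧ ∀ z : ℂ, c ≤ z.re →
      |Real.log ‖z + a‖ - Real.log ‖z‖ - a * (Real.log ‖z + 1‖ - Real.log ‖z‖)|
        ≤ K / ‖z‖ ^ 2 := by
  obtain ⟨K, hK, hKa⟩ := exists_abs_log_norm_add_sub_le hc hca
  obtain ⟨K₁, hK₁, hKone⟩ :=
    exists_abs_log_norm_add_sub_le (a := 1) hc (by positivity)
  refine ⟨K + |a| * K₁, by positivity, fun z hz ↦ ?_⟩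
  have ha := hKa z hz
  have hone := hKone z hz
  rw [ofReal_one, one_mul] at hone
  calc _ = |(Real.log ‖z + a‖ - Real.log ‖z‖ - a * (z⁻¹).re)
        - a * (Real.log ‖z + 1‖ - Real.log ‖z‖ - (z⁻¹).re)| := by ring_nf
    _ ≤ K / ‖z‖ ^ 2 + |a| * (K₁ / ‖z‖ ^ 2) := by
      refine (abs_sub _ _).trans ?_
      rw [abs_mul]
      gcongr
    _ = (K + |a| * K₁) / ‖z‖ ^ 2 := by ring

theorem log_norm_GammaSeq_add_sub {s : ℂ} (hs : 0 < s.re) (hsa : 0 < s.re + a) {n : ℕ}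
    (hn : n ≠ 0) :
    Real.log ‖GammaSeq (s + a) n‖ - Real.log ‖GammaSeq s n‖ - a * Real.log ‖s‖
      = a * (Real.log n - Real.log ‖s + (n + 1 : ℕ)‖) - ∑ j ∈ Finset.range (n + 1),
        (Real.log ‖s + j + a‖ - Real.log ‖s + j‖
          - a * (Real.log ‖s + j + 1‖ - Real.log ‖s + j‖)) := by
  have htelescope : ∑ j ∈ Finset.range (n + 1), (Real.log ‖s + j + 1‖ - Real.log ‖s + j‖)
      = Real.log ‖s + (n + 1 : ℕ)‖ - Real.log ‖s‖ := by
    have h := Finset.sum_range_sub (fun j : ℕ ↦ Real.log ‖s + j‖) (n + 1)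
    simpa only [Nat.cast_add, Nat.cast_one, Nat.cast_zero, add_zero, add_assoc] using h
  rw [log_norm_GammaSeq (by simpa using hsa) hn, log_norm_GammaSeq hs hn,
    Finset.sum_sub_distrib, Finset.sum_sub_distrib, ← Finset.mul_sum, htelescope]
  simp only [add_re, ofReal_re, add_right_comm s (a : ℂ)]
  ring

theorem tendsto_log_natCast_sub_log_norm_add (s : ℂ) :
    Tendsto (fun n : ℕ ↦ Real.log n - Real.log ‖s + (n + 1 : ℕ)‖) atTop (𝓝 0) := by
  have hinv : Tendsto (fun n : ℕ ↦ ((n : ℂ))⁻¹) atTop (𝓝 0) := tendsto_inv_atTop_nhds_zero_nat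
  have hratio : Tendsto (fun n : ℕ ↦ Real.log ‖1 + (s + 1) * (n : ℂ)⁻¹‖) atTop (𝓝 0) := by
    have h := (((hinv.const_mul (s + 1)).const_add 1).norm).log (by simp)
    simpa using h
  refine (neg_zero (G := ℝ) ▸ hratio.neg).congr' ?_
  have hne : ∀ᶠ n : ℕ in atTop, ‖1 + (s + 1) * (n : ℂ)⁻¹‖ ≠ 0 :=
    (((hinv.const_mul (s + 1)).const_add 1).norm).eventually_ne (by simp)
  filter_upwards [hne, eventually_gt_atTop 0] with n hn hn0
  have hn0' : (n : ℝ) ≠ 0 := by positivity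
  have hfactor : ‖s + (n + 1 : ℕ)‖ = n * ‖1 + (s + 1) * (n : ℂ)⁻¹‖ := by
    have hn0'' : (n : ℂ) ≠ 0 := by exact_mod_cast hn0'
    rw [← norm_natCast (α := ℂ) n, ← norm_mul]
    congr 1
    push_cast
    field_simp
    ring
  rw [hfactor, Real.log_mul hn0' hn]
  ring

theorem exists_abs_log_norm_Gamma_add_sub_le (hc : 0 < c) (hca : 0 < c + a) :
    ∃ K, ∀ s : ℂ, c ≤ s.re →
      |Real.log ‖Gamma (s + a) / Gamma s‖ - a * Real.log ‖s‖| ≤ K := by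
  obtain ⟨K, hK, hstep⟩ := exists_abs_log_norm_add_sub_mul_le hc hca
  refine ⟨K * (4 * (1 + 1 / c) / c), fun s hs ↦ ?_⟩
  have hs0 : 0 < s.re := hc.trans_le hs
  have hsa0 : 0 < (s + a).re := by simpa using hca.trans_le (by gcongr)
  have hΓ := Gamma_ne_zero_of_re_pos hs0
  have hΓa := Gamma_ne_zero_of_re_pos hsa0
  have hlim : Tendsto (fun n : ℕ ↦ Real.log ‖GammaSeq (s + a) n‖ - Real.log ‖GammaSeq s n‖
        - a * Real.log ‖s‖ - a * (Real.log n - Real.log ‖s + (n + 1 : ℕ)‖)) atTop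
      (𝓝 (Real.log ‖Gamma (s + a) / Gamma s‖ - a * Real.log ‖s‖)) := by
    have h := ((((GammaSeq_tendsto_Gamma (s + a)).norm.log (norm_ne_zero_iff.2 hΓa)).sub
      ((GammaSeq_tendsto_Gamma s).norm.log (norm_ne_zero_iff.2 hΓ))).sub_const
      (a * Real.log ‖s‖)).sub ((tendsto_log_natCast_sub_log_norm_add s).const_mul a)
    rwa [mul_zero, sub_zero, ← Real.log_div (norm_ne_zero_iff.2 hΓa) (norm_ne_zero_iff.2 hΓ),
      ← norm_div] at h
  refine le_of_tendsto hlim.abs ?_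
  filter_upwards [eventually_ne_atTop 0] with n hn
  rw [log_norm_GammaSeq_add_sub hs0 (by simpa using hsa0) hn, sub_sub_cancel_left, abs_neg]
  calc _ ≤ ∑ j ∈ Finset.range (n + 1), K * (‖s + j‖ ^ 2)⁻¹ :=
        (Finset.abs_sum_le_sum_abs _ _).trans
          (Finset.sum_le_sum fun j _ ↦ hstep _ (hs.trans (by simp)))
    _ ≤ K * (4 * (1 + 1 / c) / ‖s‖) := by
      rw [← Finset.mul_sum]
      gcongr
      exact sum_inv_norm_add_natCast_sq_le hc hs _
    _ ≤ K * (4 * (1 + 1 / c) / c) := by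
      gcongr
      exact le_norm_of_le_re hs

end GammaGrowth

section Laplace

/-- The functions of exponential order `m` on the half-line, whose Laplace transforms converge on
`m < re s`; the values at `v ≤ 0` are irrelevant. -/
structure IsExponentialOrder (φ : ℝ → ℝ) (m : ℝ) : Prop where
  measurable : Measurable φ
  exists_bound : ∃ B, 0 ≤ B ∧ ∀ v, 0 < v → |φ v| ≤ B * Real.exp (m * v)

/-- The one-sided Laplace transform `∫₀^∞ φ(v) e^{-sv} dv`. -/
noncomputable def laplaceTransform (φ : ℝ → ℝ) (s : ℂ) : ℂ :=
  ∫ v in Ioi (0 : ℝ), (φ v : ℂ) * cexp (-(s * v))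

variable {φ ψ : ℝ → ℝ} {m : ℝ} {s : ℂ}

theorem norm_cexp_neg_mul_ofReal (s : ℂ) (v : ℝ) :
    ‖cexp (-(s * v))‖ = Real.exp (-(s.re * v)) := by
  rw [norm_exp, neg_re, re_mul_ofReal]

namespace IsExponentialOrder

theorem sub (hφ : IsExponentialOrder φ m) (hψ : IsExponentialOrder ψ m) :
    IsExponentialOrder (fun v ↦ φ v - ψ v) m := by
  obtain ⟨B, hB, hφB⟩ := hφ.exists_bound
  obtain ⟨C, hC, hψC⟩ := hψ.exists_bound
  refine ⟨hφ.measurable.sub hψ.measurable, B + C, by positivity, fun v hv ↦ ?_⟩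
  rw [add_mul]
  exact (abs_sub _ _).trans (add_le_add (hφB v hv) (hψC v hv))

theorem sum {ι : Type*} {t : Finset ι} {φ : ι → ℝ → ℝ}
    (hφ : ∀ k ∈ t, IsExponentialOrder (φ k) m) :
    IsExponentialOrder (fun v ↦ ∑ k ∈ t, φ k v) m := by
  classical
  have hbound : ∀ k, ∃ B, k ∈ t → 0 ≤ B ∧ ∀ v, 0 < v → |φ k v| ≤ B * Real.exp (m * v) := by
    intro k
    by_cases hk : k ∈ t
    · exact (hφ k hk).exists_bound.imp fun _ hB _ ↦ hB
    · exact ⟨0, fun h ↦ absurd h hk⟩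
  choose B hB using hbound
  refine ⟨Finset.measurable_fun_sum t fun k hk ↦ (hφ k hk).measurable, ∑ k ∈ t, B k,
    Finset.sum_nonneg fun k hk ↦ (hB k hk).1, fun v hv ↦ ?_⟩
  rw [Finset.sum_mul]
  exact (Finset.abs_sum_le_sum_abs _ _).trans
    (Finset.sum_le_sum fun k hk ↦ (hB k hk).2 v hv)

theorem exists_norm_mul_cexp_le (hφ : IsExponentialOrder φ m) :
    ∃ B, ∀ (s : ℂ) (v : ℝ), 0 < v →
      ‖(φ v : ℂ) * cexp (-(s * v))‖ ≤ B * Real.exp (-(s.re - m) * v) := by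
  obtain ⟨B, -, hφB⟩ := hφ.exists_bound
  refine ⟨B, fun s v hv ↦ ?_⟩
  calc _ = |φ v| * Real.exp (-(s.re * v)) := by
        rw [norm_mul, norm_real, Real.norm_eq_abs, norm_cexp_neg_mul_ofReal]
    _ ≤ B * Real.exp (m * v) * Real.exp (-(s.re * v)) := by gcongr; exact hφB v hv
    _ = _ := by rw [mul_assoc, ← Real.exp_add]; ring_nf

theorem measurable_mul_cexp (hφ : IsExponentialOrder φ m) (s : ℂ) :
    Measurable fun v : ℝ ↦ (φ v : ℂ) * cexp (-(s * v)) := by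
  have := hφ.measurable
  fun_prop

theorem integrableOn_mul_cexp (hφ : IsExponentialOrder φ m) (hs : m < s.re) :
    IntegrableOn (fun v : ℝ ↦ (φ v : ℂ) * cexp (-(s * v))) (Ioi 0) := by
  obtain ⟨B, hbound⟩ := hφ.exists_norm_mul_cexp_le
  have hdom : IntegrableOn (fun v ↦ B * Real.exp (-(s.re - m) * v)) (Ioi 0) :=
    (integrableOn_exp_mul_Ioi (by linarith) 0).const_mul B
  exact hdom.mono' (hφ.measurable_mul_cexp s).aestronglyMeasurable
    (ae_restrict_of_forall_mem measurableSet_Ioi (hbound s))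

theorem exists_norm_laplaceTransform_le (hφ : IsExponentialOrder φ m) :
    ∃ B, ∀ s : ℂ, m < s.re → ‖laplaceTransform φ s‖ ≤ B / (s.re - m) := by
  obtain ⟨B, hbound⟩ := hφ.exists_norm_mul_cexp_le
  refine ⟨B, fun s hs ↦ ?_⟩
  calc ‖laplaceTransform φ s‖ ≤ ∫ v in Ioi (0 : ℝ), B * Real.exp (-(s.re - m) * v) :=
        norm_integral_le_of_norm_le ((integrableOn_exp_mul_Ioi (by linarith) 0).const_mul B)
          (ae_restrict_of_forall_mem measurableSet_Ioi (hbound s))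
    _ = B / (s.re - m) := by
      rw [integral_const_mul, integral_exp_mul_Ioi (by linarith), mul_zero, Real.exp_zero,
        neg_div_neg_eq, mul_one_div]

theorem tendsto_laplaceTransform_add_natCast (hφ : IsExponentialOrder φ m) (s : ℂ) :
    Tendsto (fun n : ℕ ↦ laplaceTransform φ (s + n)) atTop (𝓝 0) := by
  obtain ⟨B, hbound⟩ := hφ.exists_norm_laplaceTransform_le
  have hre : Tendsto (fun n : ℕ ↦ (s + n).re - m) atTop atTop := by
    simp only [add_re, natCast_re]
    exact tendsto_atTop_add_const_right _ _
      (tendsto_atTop_add_const_left _ _ tendsto_natCast_atTop_atTop)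
  refine squeeze_zero_norm' ?_ (hre.const_div_atTop B)
  filter_upwards [hre.eventually_gt_atTop 0] with n hn
  exact hbound _ (sub_pos.1 hn)

end IsExponentialOrder

theorem laplaceTransform_sub (hφ : IsExponentialOrder φ m) (hψ : IsExponentialOrder ψ m)
    (hs : m < s.re) :
    laplaceTransform (fun v ↦ φ v - ψ v) s = laplaceTransform φ s - laplaceTransform ψ s := by
  simp only [laplaceTransform, ofReal_sub, sub_mul]
  exact integral_sub (hφ.integrableOn_mul_cexp hs) (hψ.integrableOn_mul_cexp hs)

theorem laplaceTransform_sum {ι : Type*} {t : Finset ι} {φ : ι → ℝ → ℝ}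
    (hφ : ∀ k ∈ t, IsExponentialOrder (φ k) m) (hs : m < s.re) :
    laplaceTransform (fun v ↦ ∑ k ∈ t, φ k v) s = ∑ k ∈ t, laplaceTransform (φ k) s := by
  simp only [laplaceTransform, ofReal_sum, Finset.sum_mul]
  exact integral_finsetSum t fun k hk ↦ (hφ k hk).integrableOn_mul_cexp hs

end Laplace

section Digamma

variable {a c m : ℝ} {s : ℂ}

theorem norm_le_exp_mul_norm_of_abs_log_norm_sub_le {f : ℂ → ℂ} {z : ℂ} {K : ℝ}
    (hfs : f s ≠ 0) (hfz : f z ≠ 0) (hs : |Real.log ‖f s‖ - a * Real.log ‖s‖| ≤ K)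
    (hz : |Real.log ‖f z‖ - a * Real.log ‖z‖| ≤ K) (hdist : ‖z - s‖ ≤ ‖s‖ / 2) (hs0 : s ≠ 0) :
    ‖f z‖ ≤ Real.exp (2 * K + |a| * Real.log 2) * ‖f s‖ := by
  replace hfs := norm_pos_iff.2 hfs
  replace hfz := norm_pos_iff.2 hfz
  replace hs0 := norm_pos_iff.2 hs0
  have hnorm := abs_le.1 ((abs_norm_sub_norm_le z s).trans hdist)
  have hz0 : 0 < ‖z‖ := by linarith
  have hlog : |Real.log ‖z‖ - Real.log ‖s‖| ≤ Real.log 2 := by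
    have hupper : Real.log ‖z‖ ≤ Real.log (2 * ‖s‖) := Real.log_le_log hz0 (by linarith)
    have hlower : Real.log ‖s‖ ≤ Real.log (2 * ‖z‖) := Real.log_le_log hs0 (by linarith)
    rw [Real.log_mul two_ne_zero (by positivity)] at hupper hlower
    exact abs_le.2 ⟨by linarith, by linarith⟩
  have hmul : a * (Real.log ‖z‖ - Real.log ‖s‖) ≤ |a| * Real.log 2 :=
    (le_abs_self _).trans (by rw [abs_mul]; gcongr)
  rw [← Real.log_le_log_iff hfz (by positivity), Real.log_mul (Real.exp_ne_zero _) hfs.ne',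
    Real.log_exp]
  linarith [(abs_le.1 hz).2, (abs_le.1 hs).1]

theorem norm_logDeriv_le_of_abs_log_norm_sub_le {f : ℂ → ℂ} {K : ℝ} (hc : 0 < c)
    (hf : ∀ z : ℂ, c ≤ z.re → DifferentiableAt ℂ f z) (hf0 : ∀ z : ℂ, c ≤ z.re → f z ≠ 0)
    (hbound : ∀ z : ℂ, c ≤ z.re → |Real.log ‖f z‖ - a * Real.log ‖z‖| ≤ K)
    (hs : 2 * c ≤ s.re) :
    ‖logDeriv f s‖ ≤ 2 * Real.exp (2 * K + |a| * Real.log 2) / s.re := by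
  have hr : 0 < s.re / 2 := by linarith
  have hball : ∀ z ∈ Metric.closedBall s (s.re / 2), c ≤ z.re := by
    intro z hz
    have h := (abs_re_le_norm (z - s)).trans (mem_closedBall_iff_norm.1 hz)
    rw [sub_re] at h
    linarith [(abs_le.1 h).1]
  have hs0 : 0 < ‖s‖ := by linarith [re_le_norm s]
  have hfs : 0 < ‖f s‖ := norm_pos_iff.2 (hf0 s (by linarith))
  have hsphere : ∀ z ∈ Metric.sphere s (s.re / 2),
      ‖f z‖ ≤ Real.exp (2 * K + |a| * Real.log 2) * ‖f s‖ := by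
    intro z hz
    refine norm_le_exp_mul_norm_of_abs_log_norm_sub_le (hf0 s (by linarith))
      (hf0 z (hball z (Metric.sphere_subset_closedBall hz)))
      (hbound s (by linarith)) (hbound z (hball z (Metric.sphere_subset_closedBall hz))) ?_
      (norm_pos_iff.1 hs0)
    rw [mem_sphere_iff_norm.1 hz]
    linarith [re_le_norm s]
  have hdiff : DiffContOnCl ℂ f (Metric.ball s (s.re / 2)) :=
    DifferentiableOn.diffContOnCl fun z hz ↦
      (hf z (hball z (Metric.closure_ball_subset_closedBall hz))).differentiableWithinAt
  calc ‖logDeriv f s‖ = ‖deriv f s‖ / ‖f s‖ := by rw [logDeriv_apply, norm_div]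
    _ ≤ Real.exp (2 * K + |a| * Real.log 2) * ‖f s‖ / (s.re / 2) / ‖f s‖ := by
      gcongr
      exact norm_deriv_le_of_forall_mem_sphere_norm_le hr hdiff hsphere
    _ = 2 * Real.exp (2 * K + |a| * Real.log 2) / s.re := by field_simp

theorem differentiableAt_Gamma_of_re_pos (hs : 0 < s.re) : DifferentiableAt ℂ Gamma s := by
  refine differentiableAt_Gamma s fun n h ↦ ?_
  rw [h, neg_re, natCast_re] at hs
  linarith [(Nat.cast_nonneg n : (0 : ℝ) ≤ n)]

theorem logDeriv_Gamma_add (s : ℂ) (a : ℝ) :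
    logDeriv (fun z ↦ Gamma (z + a)) s = digamma (s + a) := by
  rw [logDeriv_apply, deriv_comp_add_const, ← logDeriv_apply, digamma_def]

theorem differentiableAt_Gamma_add (hsa : 0 < s.re + a) :
    DifferentiableAt ℂ (fun z ↦ Gamma (z + a)) s :=
  differentiableAt_comp_add_const.2
    (differentiableAt_Gamma_of_re_pos (by simpa using hsa))

theorem Gamma_add_ne_zero (hsa : 0 < s.re + a) : Gamma (s + a) ≠ 0 :=
  Gamma_ne_zero_of_re_pos (by simpa using hsa)

theorem logDeriv_Gamma_add_div_Gamma (hs : 0 < s.re) (hsa : 0 < s.re + a) :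
    logDeriv (fun z ↦ Gamma (z + a) / Gamma z) s = digamma (s + a) - digamma s := by
  rw [logDeriv_div s (Gamma_add_ne_zero hsa) (Gamma_ne_zero_of_re_pos hs)
    (differentiableAt_Gamma_add hsa) (differentiableAt_Gamma_of_re_pos hs), logDeriv_Gamma_add,
    digamma_def]

theorem tendsto_digamma_add_natCast_sub (hs : 0 < s.re) (hsa : 0 < s.re + a) :
    Tendsto (fun n : ℕ ↦ digamma (s + n + a) - digamma (s + n)) atTop (𝓝 0) := by
  obtain ⟨K, hbound⟩ := exists_abs_log_norm_Gamma_add_sub_le hs hsa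
  have hre : Tendsto (fun n : ℕ ↦ (s + n).re) atTop atTop := by
    simp only [add_re, natCast_re]
    exact tendsto_atTop_add_const_left _ _ tendsto_natCast_atTop_atTop
  have hpos {z : ℂ} (hz : s.re ≤ z.re) : 0 < z.re ∧ 0 < z.re + a :=
    ⟨hs.trans_le hz, hsa.trans_le (by gcongr)⟩
  refine squeeze_zero_norm' ?_
    (hre.const_div_atTop (2 * Real.exp (2 * K + |a| * Real.log 2)))
  filter_upwards [hre.eventually_ge_atTop (2 * s.re)] with n hn
  obtain ⟨h₁, h₂⟩ := hpos (z := s + n) (by linarith)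
  rw [← logDeriv_Gamma_add_div_Gamma h₁ h₂]
  refine norm_logDeriv_le_of_abs_log_norm_sub_le hs (fun z hz ↦ ?_) (fun z hz ↦ ?_) hbound hn
  · exact (differentiableAt_Gamma_add (hpos hz).2).div
      (differentiableAt_Gamma_of_re_pos (hpos hz).1) (Gamma_ne_zero_of_re_pos (hpos hz).1)
  · exact div_ne_zero (Gamma_add_ne_zero (hpos hz).2) (Gamma_ne_zero_of_re_pos (hpos hz).1)

theorem digamma_add_one_of_re_pos (hs : 0 < s.re) : digamma (s + 1) = digamma s + s⁻¹ := by
  refine digamma_apply_add_one s fun n h ↦ ?_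
  rw [h, neg_re, natCast_re] at hs
  linarith [(Nat.cast_nonneg n : (0 : ℝ) ≤ n)]

theorem digamma_add_sub_eq_sum (hs : 0 < s.re) (hsa : 0 < s.re + a) (n : ℕ) :
    digamma (s + a) - digamma s
      = ∑ j ∈ Finset.range n, ((s + j)⁻¹ - (s + j + a)⁻¹)
        + (digamma (s + n + a) - digamma (s + n)) := by
  induction n with
  | zero => simp
  | succ n ih =>
    have h₁ : digamma (s + n + 1) = digamma (s + n) + (s + n)⁻¹ :=
      digamma_add_one_of_re_pos (by simpa using by positivity)
    have h₂ : digamma (s + n + a + 1) = digamma (s + n + a) + (s + n + a)⁻¹ :=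
      digamma_add_one_of_re_pos (by
        simp only [add_re, natCast_re, ofReal_re]
        linarith [(Nat.cast_nonneg n : (0 : ℝ) ≤ n)])
    rw [ih, Finset.sum_range_succ, Nat.cast_add_one, ← add_assoc, add_right_comm (s + n) 1, h₁, h₂]
    ring

theorem exists_norm_digamma_add_sub_le (hc : 0 < c) (hca : 0 < c + a) :
    ∃ K, 0 ≤ K ∧ ∀ s : ℂ, c ≤ s.re → ‖digamma (s + a) - digamma s‖ ≤ K / ‖s‖ := by
  set M := 1 + |a| / (c + a)
  refine ⟨|a| * M * (4 * (1 + 1 / c)), by positivity, fun s hs ↦ ?_⟩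
  have hs0 : 0 < s.re := hc.trans_le hs
  have hsa : 0 < s.re + a := hca.trans_le (by gcongr)
  have hterm (j : ℕ) : ‖(s + j)⁻¹ - (s + j + a)⁻¹‖ ≤ |a| * M * (‖s + j‖ ^ 2)⁻¹ := by
    have hj : c ≤ (s + j).re := hs.trans (by simp)
    have hz : 0 < ‖s + j‖ := hc.trans_le (le_norm_of_le_re hj)
    have hza : 0 < ‖s + j + a‖ :=
      hca.trans_le (le_norm_of_le_re (by rw [add_re, ofReal_re]; gcongr))
    have hcomp : ‖s + j + a‖⁻¹ ≤ M * ‖s + j‖⁻¹ := by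
      rw [← div_eq_mul_inv, inv_le_iff_one_le_mul₀ hza, div_mul_eq_mul_div, one_le_div hz]
      exact norm_le_mul_norm_add_ofReal hca hj
    calc _ = |a| * ‖s + j + a‖⁻¹ * ‖s + j‖⁻¹ := by
          rw [inv_sub_inv (norm_pos_iff.1 hz) (norm_pos_iff.1 hza), add_sub_cancel_left,
            norm_div, norm_mul, norm_real, Real.norm_eq_abs]
          field_simp
      _ ≤ |a| * (M * ‖s + j‖⁻¹) * ‖s + j‖⁻¹ := by gcongr
      _ = |a| * M * (‖s + j‖ ^ 2)⁻¹ := by field_simp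
  have hlim := ((tendsto_digamma_add_natCast_sub hs0 hsa).const_sub
    (digamma (s + a) - digamma s)).norm
  rw [sub_zero] at hlim
  refine le_of_tendsto hlim (Eventually.of_forall fun n ↦ ?_)
  rw [digamma_add_sub_eq_sum hs0 hsa n, add_sub_cancel_right]
  calc _ ≤ ∑ j ∈ Finset.range n, |a| * M * (‖s + j‖ ^ 2)⁻¹ :=
        norm_sum_le_of_le _ fun j _ ↦ hterm j
    _ ≤ |a| * M * (4 * (1 + 1 / c) / ‖s‖) := by
      rw [← Finset.mul_sum]
      gcongr
      exact sum_inv_norm_add_natCast_sq_le hc hs n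
    _ = |a| * M * (4 * (1 + 1 / c)) / ‖s‖ := by ring

/-- The kernel `(1 - e^{-av}) / (1 - e^{-v})` whose Laplace transform is `ψ(s + a) - ψ(s)`, by
Gauss's formula for the digamma function. -/
noncomputable def gaussKernel (a v : ℝ) : ℝ :=
  (1 - Real.exp (-(a * v))) / (1 - Real.exp (-v))

theorem abs_one_sub_exp_neg_le (x : ℝ) :
    |1 - Real.exp (-x)| ≤ |x| * Real.exp (max 0 (-x)) := by
  rcases le_total 0 x with hx | hx
  · have hexp : Real.exp (-x) ≤ 1 := Real.exp_le_one_iff.2 (by linarith)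
    rw [max_eq_left (by linarith), Real.exp_zero, mul_one, abs_of_nonneg hx,
      abs_of_nonneg (by linarith)]
    linarith [Real.one_sub_le_exp_neg x]
  · have hexp : 1 ≤ Real.exp (-x) := Real.one_le_exp (by linarith)
    have hmul : (1 + x) * Real.exp (-x) ≤ 1 := by
      calc (1 + x) * Real.exp (-x) ≤ Real.exp x * Real.exp (-x) := by
            gcongr
            linarith [Real.add_one_le_exp x]
        _ = 1 := by rw [← Real.exp_add, add_neg_cancel, Real.exp_zero]
    rw [max_eq_right (by linarith), abs_of_nonpos hx, abs_of_nonpos (by linarith)]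
    linarith

theorem abs_gaussKernel_le {δ v : ℝ} (a : ℝ) (hδ : 0 < δ) (hv : 0 < v) :
    |gaussKernel a v| ≤ |a| * (1 + 1 / δ) * Real.exp ((max 0 (-a) + δ) * v) := by
  have hden : v / (1 + v) ≤ 1 - Real.exp (-v) := by
    have h : Real.exp (-v) ≤ (1 + v)⁻¹ := by
      rw [Real.exp_neg]
      gcongr
      linarith [Real.add_one_le_exp v]
    have h' : v / (1 + v) = 1 - (1 + v)⁻¹ := by field_simp; ring
    linarith
  have hden0 : 0 < 1 - Real.exp (-v) := lt_of_lt_of_le (by positivity) hden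
  have hlinear : 1 + v ≤ (1 + 1 / δ) * Real.exp (δ * v) := by
    have h := Real.add_one_le_exp (δ * v)
    calc 1 + v ≤ (1 + 1 / δ) * (δ * v + 1) := by
          have : (1 + 1 / δ) * (δ * v + 1) = 1 + v + (δ * v + 1 / δ) := by field_simp; ring
          rw [this]
          exact le_add_of_nonneg_right (by positivity)
      _ ≤ _ := by gcongr
  calc |gaussKernel a v| = |1 - Real.exp (-(a * v))| / (1 - Real.exp (-v)) := by
        rw [gaussKernel, abs_div, abs_of_pos hden0]
    _ ≤ |a * v| * Real.exp (max 0 (-(a * v))) / (v / (1 + v)) := by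
      gcongr
      exact abs_one_sub_exp_neg_le _
    _ = |a| * Real.exp (max 0 (-a) * v) * (1 + v) := by
      rw [abs_mul, abs_of_pos hv, max_mul_of_nonneg _ _ hv.le, zero_mul, neg_mul]
      field_simp
    _ ≤ |a| * Real.exp (max 0 (-a) * v) * ((1 + 1 / δ) * Real.exp (δ * v)) := by gcongr
    _ = _ := by rw [add_mul (max 0 (-a)) δ v, Real.exp_add]; ring

theorem isExponentialOrder_gaussKernel (hm : 0 < m) (ham : -a < m) :
    IsExponentialOrder (gaussKernel a) m := by
  have hδ : 0 < m - max 0 (-a) := sub_pos.2 (max_lt hm ham)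
  refine ⟨by unfold gaussKernel; fun_prop, |a| * (1 + 1 / (m - max 0 (-a))), by positivity,
    fun v hv ↦ ?_⟩
  have h := abs_gaussKernel_le a hδ hv
  rwa [add_sub_cancel] at h

theorem laplaceTransform_gaussKernel_sub_add_one (hm : 0 < m) (ham : -a < m) (hs : m < s.re) :
    laplaceTransform (gaussKernel a) s - laplaceTransform (gaussKernel a) (s + 1)
      = s⁻¹ - (s + a)⁻¹ := by
  have hκ := isExponentialOrder_gaussKernel hm ham
  have hint (z : ℂ) (hz : 0 < z.re) :
      ∫ v in Ioi (0 : ℝ), cexp (-z * v) = z⁻¹ := by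
    rw [integral_exp_mul_complex_Ioi (by simpa using hz), ofReal_zero, mul_zero, Complex.exp_zero,
      neg_div_neg_eq, one_div]
  have hs0 : 0 < s.re := hm.trans hs
  have hsa : 0 < (s + a).re := by rw [add_re, ofReal_re]; linarith
  simp only [laplaceTransform]
  rw [← integral_sub (hκ.integrableOn_mul_cexp hs)
      (hκ.integrableOn_mul_cexp (hs.trans (by simp))), ← hint s hs0, ← hint _ hsa,
    ← integral_sub (integrableOn_exp_mul_complex_Ioi (by simpa using hs0) 0)
      (integrableOn_exp_mul_complex_Ioi (by rw [neg_re]; linarith) 0)]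
  refine setIntegral_congr_fun measurableSet_Ioi fun v hv ↦ ?_
  have hden : (1 - cexp (-v)) ≠ 0 := by
    have h : (1 - Real.exp (-v)) ≠ 0 := (sub_pos.2 (Real.exp_lt_one_iff.2 (neg_lt_zero.2 hv))).ne'
    exact_mod_cast h
  have h₁ : cexp (-((s + 1) * v)) = cexp (-(s * v)) * cexp (-v) := by
    rw [← Complex.exp_add]; ring_nf
  have h₂ : cexp (-(s + a) * v) = cexp (-(s * v)) * cexp (-(a * v)) := by
    rw [← Complex.exp_add]; ring_nf
  simp only [gaussKernel]
  push_cast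
  rw [h₁, h₂, neg_mul]
  field_simp

theorem digamma_add_sub_eq_laplaceTransform (hm : 0 < m) (ham : -a < m) (hs : m < s.re) :
    digamma (s + a) - digamma s = laplaceTransform (gaussKernel a) s := by
  have hs0 : 0 < s.re := hm.trans hs
  have hsa : 0 < s.re + a := by linarith
  have hsum (n : ℕ) : laplaceTransform (gaussKernel a) s
      = ∑ j ∈ Finset.range n, ((s + j)⁻¹ - (s + j + a)⁻¹)
        + laplaceTransform (gaussKernel a) (s + n) := by
    induction n with
    | zero => simp
    | succ n ih =>
      have h := laplaceTransform_gaussKernel_sub_add_one hm ham (s := s + n)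
        (hs.trans_le (by simp))
      rw [ih, Finset.sum_range_succ, Nat.cast_add_one, ← add_assoc, ← h]
      ring
  have hlim := (tendsto_digamma_add_natCast_sub hs0 hsa).sub
    ((isExponentialOrder_gaussKernel hm ham).tendsto_laplaceTransform_add_natCast s)
  refine sub_eq_zero.1 (tendsto_nhds_unique (tendsto_const_nhds.congr fun n ↦ ?_)
    (sub_zero (0 : ℂ) ▸ hlim))
  rw [digamma_add_sub_eq_sum hs0 hsa n, hsum n]
  ring

end Digamma

section Oscillatory

variable {f f' : ℝ → ℂ} {ν C w R : ℝ}

theorem norm_cexp_ofReal_mul_I_mul_ofReal (t w : ℝ) : ‖cexp (t * I * w)‖ = 1 := by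
  rw [mul_right_comm, ← ofReal_mul, norm_exp_ofReal_mul_I]

theorem norm_integral_zero_mul_cexp_le (hν : ν < 1) (hf : ∀ t, 0 < t → ‖f t‖ ≤ C * t ^ (-ν))
    (hR : 0 ≤ R) :
    ‖∫ t in 0..R, f t * cexp (t * I * w)‖ ≤ C * (R ^ (1 - ν) / (1 - ν)) := by
  calc _ ≤ ∫ t in 0..R, C * t ^ (-ν) := by
        refine intervalIntegral.norm_integral_le_of_norm_le hR (Eventually.of_forall fun t ht ↦ ?_)
          ((intervalIntegral.intervalIntegrable_rpow' (by linarith)).const_mul C)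
        rw [norm_mul, norm_cexp_ofReal_mul_I_mul_ofReal, mul_one]
        exact hf t ht.1
    _ = C * (R ^ (1 - ν) / (1 - ν)) := by
      rw [intervalIntegral.integral_const_mul, integral_rpow (Or.inl (by linarith)),
        Real.zero_rpow (by linarith), sub_zero, neg_add_eq_sub]

theorem integral_mul_cexp_eq (hf : ∀ t, HasDerivAt f (f' t) t) (hf' : Continuous f')
    (hw : w ≠ 0) (T R : ℝ) :
    ∫ t in T..R, f t * cexp (t * I * w)
      = (f R * cexp (R * I * w) - f T * cexp (T * I * w)
        - ∫ t in T..R, f' t * cexp (t * I * w)) / (I * w) := by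
  have hIw : I * (w : ℂ) ≠ 0 := mul_ne_zero I_ne_zero (ofReal_ne_zero.2 hw)
  have hexp (t : ℝ) :
      HasDerivAt (fun t : ℝ ↦ cexp (t * I * w) / (I * w)) (cexp (t * I * w)) t := by
    have hlin := ((hasDerivAt_id t).ofReal_comp.mul_const I).mul_const (w : ℂ)
    have h := hlin.cexp.div_const (I * w)
    rwa [ofReal_one, one_mul, mul_div_assoc, div_self hIw, mul_one] at h
  rw [intervalIntegral.integral_mul_deriv_eq_deriv_mul (fun t _ ↦ hf t) (fun t _ ↦ hexp t)
    (hf'.intervalIntegrable _ _) (Continuous.intervalIntegrable (by fun_prop) _ _)]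
  simp only [← mul_div_assoc, intervalIntegral.integral_div]
  ring

theorem norm_integral_mul_cexp_le {T : ℝ} (hν : 0 < ν) (hf : ∀ t, HasDerivAt f (f' t) t)
    (hf' : Continuous f') (hfC : ∀ t, 0 < t → ‖f t‖ ≤ C * t ^ (-ν))
    (hfC' : ∀ t, 0 < t → ‖f' t‖ ≤ C * t ^ (-ν - 1)) (hC : 0 ≤ C) (hw : w ≠ 0) (hT : 0 < T)
    (hTR : T ≤ R) :
    ‖∫ t in T..R, f t * cexp (t * I * w)‖ ≤ C * (2 + 1 / ν) * (T ^ (-ν) / |w|) := by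
  have hR : 0 < R := hT.trans_le hTR
  have hderiv : ‖∫ t in T..R, f' t * cexp (t * I * w)‖ ≤ C * (T ^ (-ν) / ν) := by
    have hzero : (0 : ℝ) ∉ uIcc T R := by
      rw [uIcc_of_le hTR]
      exact fun h ↦ hT.not_ge h.1
    calc _ ≤ ∫ t in T..R, C * t ^ (-ν - 1) := by
          refine intervalIntegral.norm_integral_le_of_norm_le hTR
            (Eventually.of_forall fun t ht ↦ ?_)
            ((intervalIntegral.intervalIntegrable_rpow (Or.inr hzero)).const_mul C)
          rw [norm_mul, norm_cexp_ofReal_mul_I_mul_ofReal, mul_one]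
          exact hfC' t (hT.trans ht.1)
      _ = C * ((T ^ (-ν) - R ^ (-ν)) / ν) := by
        rw [intervalIntegral.integral_const_mul, integral_rpow (Or.inr ⟨by linarith, hzero⟩),
          sub_add_cancel]
        ring
      _ ≤ C * (T ^ (-ν) / ν) := by
        gcongr
        exact sub_le_self _ (by positivity)
  have hend : R ^ (-ν) ≤ T ^ (-ν) := Real.rpow_le_rpow_of_nonpos hT hTR (by linarith)
  rw [integral_mul_cexp_eq hf hf' hw, norm_div, norm_mul, norm_I, one_mul, norm_real,
    Real.norm_eq_abs]
  calc _ ≤ (C * T ^ (-ν) + C * T ^ (-ν) + C * (T ^ (-ν) / ν)) / |w| := by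
        gcongr
        refine (norm_sub_le _ _).trans (add_le_add ((norm_sub_le _ _).trans (add_le_add ?_ ?_))
          hderiv)
        · rw [norm_mul, norm_cexp_ofReal_mul_I_mul_ofReal, mul_one]
          exact (hfC R hR).trans (by gcongr)
        · rw [norm_mul, norm_cexp_ofReal_mul_I_mul_ofReal, mul_one]
          exact hfC T hT
    _ = C * (2 + 1 / ν) * (T ^ (-ν) / |w|) := by ring

/-- The constant in the bound `∫ f(t) e^{itw} dt = O(|w|^{ν-1})` for amplitudes `f` of order `-ν`;
the three terms come from `|t| ≤ 1/|w|`, the boundary terms and the integral of `f'`. -/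
noncomputable def oscillatoryConst (ν : ℝ) : ℝ := 1 / (1 - ν) + (2 + 1 / ν)

theorem norm_integral_zero_mul_cexp_le_rpow (hν : 0 < ν) (hν1 : ν < 1)
    (hf : ∀ t, HasDerivAt f (f' t) t) (hf' : Continuous f')
    (hfC : ∀ t, 0 < t → ‖f t‖ ≤ C * t ^ (-ν))
    (hfC' : ∀ t, 0 < t → ‖f' t‖ ≤ C * t ^ (-ν - 1)) (hC : 0 ≤ C) (hw : w ≠ 0) (hR : 0 ≤ R) :
    ‖∫ t in 0..R, f t * cexp (t * I * w)‖ ≤ C * oscillatoryConst ν * |w| ^ (ν - 1) := by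
  have hw0 : 0 < |w| := abs_pos.2 hw
  have := sub_pos.2 hν1
  have hcut : |w|⁻¹ ^ (1 - ν) = |w| ^ (ν - 1) := by
    rw [Real.inv_rpow hw0.le, ← Real.rpow_neg hw0.le, neg_sub]
  have htail : |w|⁻¹ ^ (-ν) / |w| = |w| ^ (ν - 1) := by
    rw [Real.inv_rpow hw0.le, Real.rpow_neg hw0.le, inv_inv, Real.rpow_sub_one hw0.ne']
  have hcont : Continuous fun t : ℝ ↦ f t * cexp (t * I * w) :=
    (continuous_iff_continuousAt.2 fun t ↦ (hf t).continuousAt).mul (by fun_prop)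
  rw [oscillatoryConst, mul_add C, add_mul]
  rcases le_total R |w|⁻¹ with hsmall | hlarge
  · calc _ ≤ C * (R ^ (1 - ν) / (1 - ν)) := norm_integral_zero_mul_cexp_le hν1 hfC hR
      _ ≤ C * (|w|⁻¹ ^ (1 - ν) / (1 - ν)) := by gcongr
      _ = C * (1 / (1 - ν)) * |w| ^ (ν - 1) := by rw [hcut]; ring
      _ ≤ _ := le_add_of_nonneg_right (by positivity)
  · rw [← intervalIntegral.integral_add_adjacent_intervals (hcont.intervalIntegrable 0 |w|⁻¹)
      (hcont.intervalIntegrable _ R)]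
    refine (norm_add_le _ _).trans (add_le_add ?_ ?_)
    · refine (norm_integral_zero_mul_cexp_le hν1 hfC (by positivity)).trans_eq ?_
      rw [hcut]
      ring
    · rw [← htail]
      exact norm_integral_mul_cexp_le hν hf hf' hfC hfC' hC hw (by positivity) hlarge

theorem norm_integral_symm_mul_cexp_le (hν : 0 < ν) (hν1 : ν < 1)
    (hf : ∀ t, HasDerivAt f (f' t) t) (hf' : Continuous f')
    (hfC : ∀ t, t ≠ 0 → ‖f t‖ ≤ C * |t| ^ (-ν))
    (hfC' : ∀ t, t ≠ 0 → ‖f' t‖ ≤ C * |t| ^ (-ν - 1)) (hC : 0 ≤ C) (hw : w ≠ 0) (hR : 0 ≤ R) :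
    ‖∫ t in -R..R, f t * cexp (t * I * w)‖ ≤ 2 * (C * oscillatoryConst ν * |w| ^ (ν - 1)) := by
  have hcont : Continuous fun t : ℝ ↦ f t * cexp (t * I * w) :=
    (continuous_iff_continuousAt.2 fun t ↦ (hf t).continuousAt).mul (by fun_prop)
  have hpos : ‖∫ t in 0..R, f t * cexp (t * I * w)‖ ≤ C * oscillatoryConst ν * |w| ^ (ν - 1) := by
    refine norm_integral_zero_mul_cexp_le_rpow hν hν1 hf hf' (fun t ht ↦ ?_) (fun t ht ↦ ?_)
      hC hw hR
    · simpa only [abs_of_pos ht] using hfC t ht.ne'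
    · simpa only [abs_of_pos ht] using hfC' t ht.ne'
  have hneg : ‖∫ t in -R..0, f t * cexp (t * I * w)‖
      ≤ C * oscillatoryConst ν * |w| ^ (ν - 1) := by
    have hreflect : ∫ t in -R..0, f t * cexp (t * I * w)
        = ∫ t in 0..R, f (-t) * cexp (t * I * (-w : ℝ)) := by
      rw [← neg_zero, ← intervalIntegral.integral_comp_neg]
      simp only [ofReal_neg, neg_mul, mul_neg, neg_zero]
    rw [hreflect, ← abs_neg w]
    refine norm_integral_zero_mul_cexp_le_rpow hν hν1 (f' := fun t ↦ -f' (-t)) (fun t ↦ ?_)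
      (by fun_prop) (fun t ht ↦ ?_) (fun t ht ↦ ?_) hC (neg_ne_zero.2 hw) hR
    · simpa [Function.comp_def] using (hf (-t)).scomp t (hasDerivAt_neg t)
    · simpa only [abs_neg, abs_of_pos ht] using hfC (-t) (neg_ne_zero.2 ht.ne')
    · simpa only [norm_neg, abs_neg, abs_of_pos ht] using hfC' (-t) (neg_ne_zero.2 ht.ne')
  rw [← intervalIntegral.integral_add_adjacent_intervals (hcont.intervalIntegrable (-R) 0)
    (hcont.intervalIntegrable 0 R), two_mul]
  exact (norm_add_le _ _).trans (add_le_add hneg hpos)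

end Oscillatory

section Bromwich

/-- The truncated inversion integral of `F` along `re s = σ`, without the usual factor
`1 / (2π)`; the variable is `s = σ + i t` with `|t| ≤ R`. -/
noncomputable def bromwich (F : ℂ → ℂ) (σ w R : ℝ) : ℂ :=
  ∫ t in -R..R, F (σ + t * I) * cexp ((σ + t * I) * w)

/-- The filter `|im s| → ∞` inside the set of `s` with `re s ∈ S`. -/
def imAtTop (S : Set ℝ) : Filter ℂ := comap (fun s ↦ |s.im|) atTop ⊓ 𝓟 (re ⁻¹' S)

/-- `F` is a holomorphic symbol of order `-ν` on the half-plane `c < re s`, with constant `C`. -/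
structure IsHalfPlaneSymbol (F : ℂ → ℂ) (c ν C : ℝ) : Prop where
  differentiableOn : DifferentiableOn ℂ F {s | c < s.re}
  norm_le : ∀ s : ℂ, c < s.re → ‖F s‖ ≤ C * ‖s‖ ^ (-ν)
  norm_deriv_le : ∀ s : ℂ, c < s.re → ‖deriv F s‖ ≤ C * ‖s‖ ^ (-ν - 1)

variable {F : ℂ → ℂ} {c ν C σ σ₁ σ₂ w R : ℝ}

theorem norm_cexp_add_mul_I_mul (σ t w : ℝ) : ‖cexp ((σ + t * I) * w)‖ = Real.exp (σ * w) := by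
  simp [norm_exp]

theorem tendsto_imAtTop_nhds_zero_iff {S : Set ℝ} :
    Tendsto F (imAtTop S) (𝓝 0)
      ↔ ∀ ε > 0, ∃ T, ∀ s : ℂ, s.re ∈ S → T ≤ |s.im| → ‖F s‖ < ε := by
  rw [imAtTop, ((atTop_basis.comap _).inf_principal _).tendsto_iff Metric.nhds_basis_ball]
  simp only [true_and, mem_inter_iff, mem_preimage, mem_Ici, and_imp, mem_ball_zero_iff]
  exact forall₂_congr fun ε _ ↦ exists_congr fun T ↦ forall_congr' fun s ↦ forall_comm

theorem imAtTop_mono {S T : Set ℝ} (h : S ⊆ T) : imAtTop S ≤ imAtTop T :=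
  inf_le_inf_left _ (principal_mono.2 (preimage_mono h))

theorem tendsto_abs_im_imAtTop (S : Set ℝ) : Tendsto (fun s : ℂ ↦ |s.im|) (imAtTop S) atTop :=
  tendsto_comap.mono_left inf_le_left

theorem tendsto_norm_imAtTop (S : Set ℝ) : Tendsto (fun s : ℂ ↦ ‖s‖) (imAtTop S) atTop :=
  tendsto_atTop_mono abs_im_le_norm (tendsto_abs_im_imAtTop S)

theorem tendsto_add_mul_I_atTop {S : Set ℝ} (hσ : σ ∈ S) :
    Tendsto (fun t : ℝ ↦ (σ + t * I : ℂ)) atTop (imAtTop S) := by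
  refine tendsto_inf.2 ⟨tendsto_comap_iff.2 ?_, tendsto_principal.2 (Eventually.of_forall ?_)⟩
  · simpa [Function.comp_def] using tendsto_abs_atTop_atTop
  · simpa using hσ

theorem tendsto_add_neg_mul_I_atTop {S : Set ℝ} (hσ : σ ∈ S) :
    Tendsto (fun t : ℝ ↦ (σ + (-t : ℝ) * I : ℂ)) atTop (imAtTop S) := by
  refine tendsto_inf.2 ⟨tendsto_comap_iff.2 ?_, tendsto_principal.2 (Eventually.of_forall ?_)⟩
  · simpa [Function.comp_def] using tendsto_abs_atTop_atTop
  · simpa using hσ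

theorem mul_bromwich_sub_bromwich
    (hF : DifferentiableOn ℂ F (re ⁻¹' Icc σ₁ σ₂)) (hσ : σ₁ ≤ σ₂) (w R : ℝ) :
    I * (bromwich F σ₁ w R - bromwich F σ₂ w R)
      = (∫ x in σ₁..σ₂, F (x + (-R : ℝ) * I) * cexp ((x + (-R : ℝ) * I) * w))
        - ∫ x in σ₁..σ₂, F (x + R * I) * cexp ((x + R * I) * w) := by
  have hrect := integral_boundary_rect_eq_zero_of_differentiableOn
    (fun s ↦ F s * cexp (s * w)) (σ₁ + (-R : ℝ) * I) (σ₂ + R * I)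
    ((hF.mono fun s hs ↦ ?_).mul (by fun_prop))
  · simp only [add_re, add_im, ofReal_re, ofReal_im, re_ofReal_mul, im_ofReal_mul, I_re, I_im,
      mul_zero, mul_one, add_zero, zero_add, smul_eq_mul] at hrect
    rw [bromwich, bromwich]
    linear_combination -hrect
  · have h := hs.1
    simpa [uIcc_of_le hσ] using h

theorem norm_integral_horizontal_le {ε y : ℝ} (hσ : σ₁ ≤ σ₂)
    (hε : ∀ s : ℂ, s.re ∈ Icc σ₁ σ₂ → |s.im| = |y| → ‖F s‖ ≤ ε) :
    ‖∫ x in σ₁..σ₂, F (x + y * I) * cexp ((x + y * I) * w)‖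
      ≤ ε * Real.exp (max |σ₁| |σ₂| * |w|) * (σ₂ - σ₁) := by
  have hε0 : 0 ≤ ε := (norm_nonneg _).trans (hε (σ₁ + y * I) (by simpa using hσ) (by simp))
  rw [← abs_of_nonneg (sub_nonneg.2 hσ)]
  refine intervalIntegral.norm_integral_le_of_norm_le_const fun x hx ↦ ?_
  rw [uIoc_of_le hσ] at hx
  rw [norm_mul, norm_cexp_add_mul_I_mul]
  have hxw : x * w ≤ max |σ₁| |σ₂| * |w| :=
    calc x * w ≤ |x| * |w| := (le_abs_self _).trans_eq (abs_mul _ _)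
      _ ≤ max |σ₁| |σ₂| * |w| := by
        gcongr
        exact abs_le_max_abs_abs hx.1.le hx.2
  exact mul_le_mul (hε _ (by simpa using Ioc_subset_Icc_self hx) (by simp))
    (Real.exp_le_exp.2 hxw) (Real.exp_nonneg _) hε0

theorem tendsto_bromwich_sub_bromwich
    (hF : DifferentiableOn ℂ F (re ⁻¹' Icc σ₁ σ₂)) (hσ : σ₁ ≤ σ₂)
    (hF0 : Tendsto F (imAtTop (Icc σ₁ σ₂)) (𝓝 0)) (w : ℝ) :
    Tendsto (fun R ↦ bromwich F σ₁ w R - bromwich F σ₂ w R) atTop (𝓝 0) := by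
  set A := Real.exp (max |σ₁| |σ₂| * |w|) * (σ₂ - σ₁)
  have hA : 0 ≤ A := mul_nonneg (Real.exp_nonneg _) (sub_nonneg.2 hσ)
  rw [Metric.tendsto_nhds]
  intro ε hε
  obtain ⟨T, hT⟩ := tendsto_imAtTop_nhds_zero_iff.1 hF0 (ε / (2 * (A + 1))) (by positivity)
  filter_upwards [eventually_ge_atTop T] with R hR
  have hside (y : ℝ) (hy : |y| = |R|) :
      ‖∫ x in σ₁..σ₂, F (x + y * I) * cexp ((x + y * I) * w)‖
        ≤ ε / (2 * (A + 1)) * A := by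
    refine (norm_integral_horizontal_le hσ fun s hs hsy ↦ (hT s hs ?_).le).trans_eq
      (mul_assoc _ _ _)
    rw [hsy, hy]
    exact hR.trans (le_abs_self R)
  rw [dist_zero_right, ← one_mul ‖_‖, ← norm_I, ← norm_mul, mul_bromwich_sub_bromwich hF hσ]
  calc _ ≤ ε / (2 * (A + 1)) * A + ε / (2 * (A + 1)) * A :=
        (norm_sub_le _ _).trans (add_le_add (hside _ (abs_neg R)) (hside _ rfl))
    _ = ε * (A / (A + 1)) := by field_simp; ring
    _ < ε := mul_lt_of_lt_one_right hε ((div_lt_one (by positivity)).2 (lt_add_one A))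

theorem integrable_inversion_laplace_prod {φ : ℝ → ℝ} {m : ℝ} (hφ : IsExponentialOrder φ m)
    (hσ : m < σ) (hF : Continuous fun t : ℝ ↦ F (σ + t * I)) (w R : ℝ) :
    Integrable (fun p : ℝ × ℝ ↦ F (σ + p.1 * I) * cexp ((σ + p.1 * I) * w)
        * (φ p.2 * cexp (-(σ * p.2))) * cexp (p.1 * I * (-p.2 : ℝ)))
      ((volume.restrict (uIoc (-R) R)).prod (volume.restrict (Ioi 0))) := by
  have hline : Continuous fun t : ℝ ↦ F (σ + t * I) * cexp ((σ + t * I) * w) :=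
    hF.mul (by fun_prop)
  have hsep := (hline.intervalIntegrable (μ := volume) (-R) R).def'.mul_prod
    (hφ.integrableOn_mul_cexp (s := (σ : ℂ)) (by simpa using hσ))
  refine hsep.norm.mono' (hsep.aestronglyMeasurable.mul
    (Continuous.aestronglyMeasurable (by fun_prop))) (Eventually.of_forall fun p ↦ ?_)
  rw [norm_mul _ (cexp (p.1 * I * (-p.2 : ℝ))), norm_cexp_ofReal_mul_I_mul_ofReal, mul_one]

theorem bromwich_laplaceTransform_mul {φ : ℝ → ℝ} {m : ℝ} (hφ : IsExponentialOrder φ m)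
    (hσ : m < σ) (hF : Continuous fun t : ℝ ↦ F (σ + t * I)) (w R : ℝ) :
    bromwich (fun s ↦ laplaceTransform φ s * F s) σ w R
      = ∫ v in Ioi (0 : ℝ), φ v * bromwich F σ (w - v) R := by
  calc _ = ∫ t in -R..R, ∫ v in Ioi (0 : ℝ), F (σ + t * I) * cexp ((σ + t * I) * w)
        * (φ v * cexp (-(σ * v))) * cexp (t * I * (-v : ℝ)) := by
        refine intervalIntegral.integral_congr fun t _ ↦ ?_
        simp only [laplaceTransform]
        rw [mul_assoc, mul_comm, ← integral_const_mul]
        refine integral_congr_ae (Eventually.of_forall fun v ↦ ?_)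
        simp only [add_mul, neg_add, Complex.exp_add, mul_assoc, ofReal_neg, mul_neg]
    _ = ∫ v in Ioi (0 : ℝ), ∫ t in -R..R, F (σ + t * I) * cexp ((σ + t * I) * w)
        * (φ v * cexp (-(σ * v))) * cexp (t * I * (-v : ℝ)) :=
        intervalIntegral_integral_swap (integrable_inversion_laplace_prod hφ hσ hF w R)
    _ = _ := by
      refine integral_congr_ae (Eventually.of_forall fun v ↦ ?_)
      simp only [bromwich]
      rw [← intervalIntegral.integral_const_mul]
      refine intervalIntegral.integral_congr fun t _ ↦ ?_
      have hexp : cexp ((σ + t * I) * (w - v : ℝ))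
          = cexp ((σ + t * I) * w) * cexp (-(σ * v)) * cexp (t * I * (-v : ℝ)) := by
        rw [← Complex.exp_add, ← Complex.exp_add]
        push_cast
        ring_nf
      simp only [hexp]
      ring

namespace IsHalfPlaneSymbol

theorem const_nonneg (hF : IsHalfPlaneSymbol F c ν C) : 0 ≤ C := by
  have hs : c < ((|c| + 1 : ℝ) : ℂ).re := by
    rw [ofReal_re]
    linarith [le_abs_self c]
  have hnorm : 0 < ‖((|c| + 1 : ℝ) : ℂ)‖ ^ (-ν) :=
    Real.rpow_pos_of_pos (norm_pos_iff.2 (ofReal_ne_zero.2 (by positivity))) _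
  exact nonneg_of_mul_nonneg_left ((norm_nonneg _).trans (hF.norm_le _ hs)) hnorm

theorem mono (hF : IsHalfPlaneSymbol F c ν C) {ν' : ℝ} (hc : 0 < c) (hν : ν' ≤ ν) :
    IsHalfPlaneSymbol F c ν' (C * c ^ (ν' - ν)) := by
  have hC := hF.const_nonneg
  have hpow {s : ℂ} (hs : c < s.re) (r : ℝ) : ‖s‖ ^ (-ν - r) ≤ c ^ (ν' - ν) * ‖s‖ ^ (-ν' - r) := by
    have hcs : c ≤ ‖s‖ := le_norm_of_le_re hs.le
    calc ‖s‖ ^ (-ν - r) = ‖s‖ ^ (ν' - ν) * ‖s‖ ^ (-ν' - r) := by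
          rw [← Real.rpow_add (hc.trans_le hcs)]
          ring_nf
      _ ≤ c ^ (ν' - ν) * ‖s‖ ^ (-ν' - r) := by
          gcongr ?_ * _
          exact Real.rpow_le_rpow_of_nonpos hc hcs (by linarith)
  refine ⟨hF.differentiableOn, fun s hs ↦ (hF.norm_le s hs).trans ?_,
    fun s hs ↦ (hF.norm_deriv_le s hs).trans ?_⟩
  · rw [mul_assoc]
    gcongr
    simpa only [sub_zero] using hpow hs 0
  · rw [mul_assoc]
    gcongr
    exact hpow hs 1

theorem tendsto_imAtTop (hF : IsHalfPlaneSymbol F c ν C) (hν : 0 < ν) :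
    Tendsto F (imAtTop (Ioi c)) (𝓝 0) := by
  have hdecay := ((tendsto_rpow_neg_atTop hν).comp (tendsto_norm_imAtTop (Ioi c))).const_mul C
  rw [mul_zero] at hdecay
  refine squeeze_zero_norm' ?_ hdecay
  filter_upwards [mem_inf_of_right (mem_principal_self _)] with s hs
  exact hF.norm_le s hs

theorem hasDerivAt_line (hF : IsHalfPlaneSymbol F c ν C) (hσ : c < σ) (t : ℝ) :
    HasDerivAt (fun t : ℝ ↦ F (σ + t * I)) (deriv F (σ + t * I) * I) t := by
  have hline : HasDerivAt (fun t : ℝ ↦ (σ + t * I : ℂ)) I t := by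
    simpa using (((hasDerivAt_id t).ofReal_comp.mul_const I).const_add (σ : ℂ))
  have hopen := (isOpen_lt continuous_const continuous_re).mem_nhds
    (show (σ + t * I : ℂ) ∈ {s : ℂ | c < s.re} by simpa using hσ)
  exact (hF.differentiableOn.differentiableAt hopen).hasDerivAt.comp t hline

theorem continuous_line (hF : IsHalfPlaneSymbol F c ν C) (hσ : c < σ) :
    Continuous fun t : ℝ ↦ F (σ + t * I) :=
  continuous_iff_continuousAt.2 fun t ↦ (hF.hasDerivAt_line hσ t).continuousAt

theorem continuous_deriv_line (hF : IsHalfPlaneSymbol F c ν C) (hσ : c < σ) :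
    Continuous fun t : ℝ ↦ deriv F (σ + t * I) :=
  (hF.differentiableOn.deriv (isOpen_lt continuous_const continuous_re)).continuousOn
    |>.comp_continuous (by fun_prop) fun t ↦ by simpa using hσ

theorem norm_bromwich_le (hF : IsHalfPlaneSymbol F c ν C) (hν : 0 < ν) (hν1 : ν < 1)
    (hσ : c < σ) (hw : w ≠ 0) (hR : 0 ≤ R) :
    ‖bromwich F σ w R‖ ≤ 2 * (C * oscillatoryConst ν * |w| ^ (ν - 1)) * Real.exp (σ * w) := by
  have hre (t : ℝ) : c < (σ + t * I : ℂ).re := by simpa using hσ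
  have him {r t : ℝ} (hr : r ≤ 0) (ht : t ≠ 0) : ‖(σ + t * I : ℂ)‖ ^ r ≤ |t| ^ r :=
    Real.rpow_le_rpow_of_nonpos (abs_pos.2 ht)
      (by simpa using abs_im_le_norm (σ + t * I : ℂ)) hr
  have hfactor : bromwich F σ w R
      = (∫ t in -R..R, F (σ + t * I) * cexp (t * I * w)) * cexp (σ * w) := by
    rw [bromwich, ← intervalIntegral.integral_mul_const]
    refine intervalIntegral.integral_congr fun t _ ↦ ?_
    simp only [add_mul, Complex.exp_add]
    ring
  rw [hfactor, norm_mul, ← ofReal_mul, norm_exp_ofReal]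
  gcongr
  have hC := hF.const_nonneg
  refine norm_integral_symm_mul_cexp_le hν hν1 (hF.hasDerivAt_line hσ)
    ((hF.continuous_deriv_line hσ).mul_const I) (fun t ht ↦ ?_) (fun t ht ↦ ?_) hC hw hR
  · exact (hF.norm_le _ (hre t)).trans
      (mul_le_mul_of_nonneg_left (him (by linarith) ht) hC)
  · rw [norm_mul, norm_I, mul_one]
    exact (hF.norm_deriv_le _ (hre t)).trans
      (mul_le_mul_of_nonneg_left (him (by linarith) ht) hC)

theorem tendsto_bromwich_zero (hF : IsHalfPlaneSymbol F c ν C) (hν : 0 < ν) (hν1 : ν < 1)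
    (hσ : c < σ) (hw : w < 0) :
    Tendsto (bromwich F σ w) atTop (𝓝 0) := by
  have hbound : Tendsto (fun τ ↦ 2 * (C * oscillatoryConst ν * |w| ^ (ν - 1)) * Real.exp (τ * w))
      atTop (𝓝 0) := by
    have h := (Real.tendsto_exp_atBot.comp (tendsto_id.atTop_mul_const_of_neg hw)).const_mul
      (2 * (C * oscillatoryConst ν * |w| ^ (ν - 1)))
    rwa [mul_zero] at h
  rw [Metric.tendsto_nhds]
  intro ε hε
  obtain ⟨τ, hτ, hστ⟩ := ((hbound.eventually_lt_const (half_pos hε)).and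
    (eventually_ge_atTop σ)).exists
  have hstrip : Icc σ τ ⊆ Ioi c := fun x hx ↦ hσ.trans_le hx.1
  have hshift := tendsto_bromwich_sub_bromwich (hF.differentiableOn.mono fun s hs ↦ hstrip hs)
    hστ ((hF.tendsto_imAtTop hν).mono_left (imAtTop_mono hstrip)) w
  filter_upwards [Metric.tendsto_nhds.1 hshift _ (half_pos hε), eventually_ge_atTop 0] with R hR hR0
  rw [dist_zero_right] at hR ⊢
  calc ‖bromwich F σ w R‖
      = ‖(bromwich F σ w R - bromwich F τ w R) + bromwich F τ w R‖ := by rw [sub_add_cancel]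
    _ < ε / 2 + ε / 2 := (norm_add_le _ _).trans_lt (add_lt_add hR
      ((hF.norm_bromwich_le hν hν1 (hσ.trans_le hστ) hw.ne hR0).trans_lt hτ))
    _ = ε := add_halves ε

theorem mul_bromwich_add_bromwich_deriv (hF : IsHalfPlaneSymbol F c ν C) (hσ : c < σ) (w R : ℝ) :
    I * (w * bromwich F σ w R + bromwich (deriv F) σ w R)
      = F (σ + R * I) * cexp ((σ + R * I) * w)
        - F (σ + (-R : ℝ) * I) * cexp ((σ + (-R : ℝ) * I) * w) := by
  have hexp (t : ℝ) : HasDerivAt (fun t : ℝ ↦ cexp ((σ + t * I) * w))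
      (cexp ((σ + t * I) * w) * (I * w)) t := by
    simpa using ((((hasDerivAt_id t).ofReal_comp.mul_const I).const_add (σ : ℂ)).mul_const
      (w : ℂ)).cexp
  have hcexp : Continuous fun t : ℝ ↦ cexp ((σ + t * I) * w) := by fun_prop
  have hcont := hF.continuous_line hσ
  have hcont' := hF.continuous_deriv_line hσ
  have hvalue : Continuous fun t : ℝ ↦ w * (F (σ + t * I) * cexp ((σ + t * I) * w)) :=
    (hcont.mul hcexp).const_mul _
  have hderiv : Continuous fun t : ℝ ↦ deriv F (σ + t * I) * cexp ((σ + t * I) * w) :=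
    hcont'.mul hcexp
  have hftc := intervalIntegral.integral_eq_sub_of_hasDerivAt (a := -R) (b := R)
    (fun t _ ↦ (hF.hasDerivAt_line hσ t).mul (hexp t))
    (((hcont'.mul_const I).mul hcexp).add (hcont.mul (hcexp.mul_const _))
      |>.intervalIntegrable _ _)
  refine Eq.trans ?_ hftc
  rw [bromwich, bromwich, ← intervalIntegral.integral_const_mul,
    ← intervalIntegral.integral_add (hvalue.intervalIntegrable _ _)
      (hderiv.intervalIntegrable _ _), ← intervalIntegral.integral_const_mul]
  refine intervalIntegral.integral_congr fun t _ ↦ ?_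
  ring

theorem tendsto_mul_bromwich_add_bromwich_deriv (hF : IsHalfPlaneSymbol F c ν C) (hν : 0 < ν)
    (hσ : c < σ) (w : ℝ) :
    Tendsto (fun R ↦ w * bromwich F σ w R + bromwich (deriv F) σ w R) atTop (𝓝 0) := by
  have hF0 := hF.tendsto_imAtTop hν
  have hedge {u : ℝ → ℝ} (hu : Tendsto (fun R ↦ F (σ + u R * I)) atTop (𝓝 0)) :
      Tendsto (fun R ↦ F (σ + u R * I) * cexp ((σ + u R * I) * w)) atTop (𝓝 0) := by
    refine squeeze_zero_norm (fun R ↦ ?_) ?_ (a := fun R ↦ ‖F (σ + u R * I)‖ * Real.exp (σ * w))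
    · rw [norm_mul, norm_cexp_add_mul_I_mul]
    · simpa using hu.norm.mul_const (Real.exp (σ * w))
  have hlim := ((hedge (hF0.comp (tendsto_add_mul_I_atTop hσ))).sub
    (hedge (hF0.comp (tendsto_add_neg_mul_I_atTop hσ)))).const_mul (-I)
  rw [sub_zero, mul_zero] at hlim
  refine hlim.congr fun R ↦ ?_
  rw [← hF.mul_bromwich_add_bromwich_deriv hσ, ← mul_assoc, neg_mul, I_mul_I, neg_neg, one_mul]

end IsHalfPlaneSymbol

end Bromwich

section Convolution

theorem integrableOn_exp_mul_abs_sub_rpow {δ r : ℝ} (hδ : 0 < δ) (hr : -1 < r) (hr0 : r ≤ 0)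
    (w : ℝ) : IntegrableOn (fun v ↦ Real.exp (-δ * v) * |w - v| ^ r) (Ioi 0) := by
  have hpow : Measurable fun v : ℝ ↦ Real.exp (-δ * v) * |w - v| ^ r := by fun_prop
  rw [← Ioc_union_Ioi_eq_Ioi (show 0 ≤ |w| + 1 by positivity)]
  refine IntegrableOn.union ?_ ?_
  · rw [← intervalIntegrable_iff_integrableOn_Ioc_of_le (by positivity)]
    have hnorm := ((intervalIntegral.intervalIntegrable_cpow' (r := (r : ℂ)) (by simpa using hr)
      (a := w - 0) (b := w - (|w| + 1))).comp_sub_left w).norm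
    simp only [sub_sub_cancel, norm_cpow_real, norm_real, Real.norm_eq_abs] at hnorm
    exact hnorm.continuousOn_mul (by fun_prop)
  · refine (integrableOn_exp_mul_Ioi (neg_lt_zero.2 hδ) _).mono' hpow.aestronglyMeasurable
      (ae_restrict_of_forall_mem measurableSet_Ioi fun v hv ↦ ?_)
    have hdist : 1 ≤ |w - v| := by
      rw [abs_sub_comm]
      linarith [le_abs_self (v - w), le_abs_self w, mem_Ioi.1 hv]
    rw [Real.norm_of_nonneg (by positivity)]
    exact mul_le_of_le_one_right (Real.exp_nonneg _)
      (Real.rpow_le_one_of_one_le_of_nonpos hdist hr0)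

variable {F : ℂ → ℂ} {φ : ℝ → ℝ} {g : ℝ → ℂ} {c ν C m σ w : ℝ}

namespace IsHalfPlaneSymbol

theorem exists_norm_mul_bromwich_le (hF : IsHalfPlaneSymbol F c ν C) (hν : 0 < ν) (hν1 : ν < 1)
    (hσ : c < σ) (hφ : IsExponentialOrder φ m) (w : ℝ) :
    ∃ A, ∀ R v : ℝ, 0 ≤ R → 0 < v → v ≠ w →
      ‖φ v * bromwich F σ (w - v) R‖ ≤ A * (Real.exp (-(σ - m) * v) * |w - v| ^ (ν - 1)) := by
  obtain ⟨B, hB, hφB⟩ := hφ.exists_bound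
  refine ⟨B * (2 * (C * oscillatoryConst ν)) * Real.exp (σ * w), fun R v hR hv hvw ↦ ?_⟩
  calc _ = |φ v| * ‖bromwich F σ (w - v) R‖ := by rw [norm_mul, norm_real, Real.norm_eq_abs]
    _ ≤ B * Real.exp (m * v)
        * (2 * (C * oscillatoryConst ν * |w - v| ^ (ν - 1)) * Real.exp (σ * (w - v))) :=
        mul_le_mul (hφB v hv) (hF.norm_bromwich_le hν hν1 hσ (sub_ne_zero.2 hvw.symm) hR)
          (norm_nonneg _) (by positivity)
    _ = _ := by
      have hexp : Real.exp (m * v) * Real.exp (σ * (w - v))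
          = Real.exp (σ * w) * Real.exp (-(σ - m) * v) := by
        rw [← Real.exp_add, ← Real.exp_add]
        ring_nf
      linear_combination (B * (2 * (C * oscillatoryConst ν)) * |w - v| ^ (ν - 1)) * hexp

theorem tendsto_bromwich_indicator (hF : IsHalfPlaneSymbol F c ν C) (hν : 0 < ν) (hν1 : ν < 1)
    (hσ : c < σ) (hg : ∀ w, 0 < w → Tendsto (bromwich F σ w) atTop (𝓝 (g w))) {v : ℝ}
    (hv : v ≠ w) :
    Tendsto (bromwich F σ (w - v)) atTop (𝓝 ((Iio w).indicator (fun u ↦ g (w - u)) v)) := by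
  rcases hv.lt_or_gt with hlt | hgt
  · rw [indicator_of_mem (mem_Iio.2 hlt)]
    exact hg _ (sub_pos.2 hlt)
  · rw [indicator_of_notMem (by simpa using hgt.le)]
    exact hF.tendsto_bromwich_zero hν hν1 hσ (sub_neg.2 hgt)

theorem tendsto_integral_mul_bromwich (hF : IsHalfPlaneSymbol F c ν C) (hν : 0 < ν)
    (hν1 : ν < 1) (hσ : c < σ) (hφ : IsExponentialOrder φ m) (hm : m < σ)
    (hg : ∀ w, 0 < w → Tendsto (bromwich F σ w) atTop (𝓝 (g w))) (hw : 0 < w) :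
    Tendsto (fun R ↦ ∫ v in Ioi (0 : ℝ), φ v * bromwich F σ (w - v) R) atTop
      (𝓝 (∫ v in 0..w, φ v * g (w - v))) := by
  obtain ⟨A, hA⟩ := hF.exists_norm_mul_bromwich_le hν hν1 hσ hφ w
  have hne : ∀ᵐ v ∂volume.restrict (Ioi (0 : ℝ)), v ≠ w :=
    ae_restrict_of_ae (Measure.ae_ne volume w)
  have hlimit : ∫ v in 0..w, φ v * g (w - v)
      = ∫ v in Ioi (0 : ℝ), φ v * (Iio w).indicator (fun u ↦ g (w - u)) v := by
    have hmul (v : ℝ) : (φ v : ℂ) * (Iio w).indicator (fun u ↦ g (w - u)) v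
        = (Iio w).indicator (fun u ↦ φ u * g (w - u)) v :=
      (indicator_mul_right (Iio w) (fun u ↦ (φ u : ℂ)) fun u ↦ g (w - u)).symm
    simp only [hmul]
    rw [setIntegral_indicator measurableSet_Iio, Ioi_inter_Iio, ← integral_Ioc_eq_integral_Ioo,
      intervalIntegral.integral_of_le hw.le]
  have hmeas (R : ℝ) : Measurable fun v ↦ (φ v : ℂ) * bromwich F σ (w - v) R := by
    have hline := hF.continuous_line hσ
    have hcont : Continuous fun v ↦ bromwich F σ (w - v) R :=
      intervalIntegral.continuous_parametric_intervalIntegral_of_continuous'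
        ((hline.comp continuous_snd).mul (by fun_prop)) _ _
    exact (measurable_ofReal.comp hφ.measurable).mul hcont.measurable
  rw [hlimit]
  refine tendsto_integral_filter_of_dominated_convergence
    (fun v ↦ A * (Real.exp (-(σ - m) * v) * |w - v| ^ (ν - 1)))
    (Eventually.of_forall fun R ↦ (hmeas R).aestronglyMeasurable) ?_
    ((integrableOn_exp_mul_abs_sub_rpow (sub_pos.2 hm) (by linarith) (by linarith) w).const_mul A)
    ?_
  · filter_upwards [eventually_ge_atTop 0] with R hR
    filter_upwards [hne, ae_restrict_mem measurableSet_Ioi] with v hvw hv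
    exact hA R v hR hv hvw
  · filter_upwards [hne] with v hvw
    exact (hF.tendsto_bromwich_indicator hν hν1 hσ hg hvw).const_mul _

theorem mul_eq_integral_of_deriv_eq (hF : IsHalfPlaneSymbol F c ν C) (hν : 0 < ν) (hν1 : ν < 1)
    (hσ : c < σ) (hφ : IsExponentialOrder φ m) (hm : m < σ)
    (hderiv : ∀ s : ℂ, s.re = σ → deriv F s = -(laplaceTransform φ s * F s))
    (hg : ∀ w, 0 < w → Tendsto (bromwich F σ w) atTop (𝓝 (g w))) (hw : 0 < w) :
    w * g w = ∫ v in 0..w, φ v * g (w - v) := by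
  have hconv (R : ℝ) : bromwich (deriv F) σ w R
      = -∫ v in Ioi (0 : ℝ), φ v * bromwich F σ (w - v) R := by
    rw [← bromwich_laplaceTransform_mul hφ hm (hF.continuous_line hσ), bromwich, bromwich,
      ← intervalIntegral.integral_neg]
    refine intervalIntegral.integral_congr fun t _ ↦ ?_
    simp only [hderiv (σ + t * I) (by simp), neg_mul]
  have hlim := ((hg w hw).const_mul (w : ℂ)).sub
    (hF.tendsto_integral_mul_bromwich hν hν1 hσ hφ hm hg hw)
  refine sub_eq_zero.1 (tendsto_nhds_unique hlim ?_)
  refine (hF.tendsto_mul_bromwich_add_bromwich_deriv hν hσ w).congr fun R ↦ ?_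
  rw [hconv, ← sub_eq_add_neg]

end IsHalfPlaneSymbol

end Convolution

theorem exists_pos_forall_neg_lt {ι : Type*} [Finite ι] (a b : ι → ℝ) :
    ∃ m, 0 < m ∧ (∀ k, -a k < m) ∧ ∀ k, -b k < m :=
  ((eventually_gt_atTop 0).and ((eventually_all.2 fun k ↦ eventually_gt_atTop (-a k)).and
    (eventually_all.2 fun k ↦ eventually_gt_atTop (-b k)))).exists

section GammaQuotient

variable {ι : Type*} [Fintype ι] {a b : ι → ℝ} {c m : ℝ} {s : ℂ}

/-- The Mellin transform `∏ Γ(s + a_k) / ∏ Γ(s + b_k)` of `G^{p,0}_{p,p}`. -/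
noncomputable def gammaQuotient (a b : ι → ℝ) (s : ℂ) : ℂ :=
  (∏ k, Gamma (s + a k)) / ∏ k, Gamma (s + b k)

/-- The function `∑ (e^{-a_k v} - e^{-b_k v}) / (1 - e^{-v})`, whose Laplace transform is minus the
logarithmic derivative of `gammaQuotient a b`. -/
noncomputable def gammaQuotientKernel (a b : ι → ℝ) (v : ℝ) : ℝ :=
  ∑ k, (gaussKernel (b k) v - gaussKernel (a k) v)

theorem gammaQuotientKernel_apply (a b : ι → ℝ) (v : ℝ) :
    gammaQuotientKernel a b v
      = (∑ k, (Real.exp (-(a k * v)) - Real.exp (-(b k * v)))) / (1 - Real.exp (-v)) := by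
  simp only [gammaQuotientKernel, gaussKernel, ← sub_div, ← Finset.sum_div, sub_sub_sub_cancel_left]

theorem isExponentialOrder_gammaQuotientKernel (hm : 0 < m) (ha : ∀ k, -a k < m)
    (hb : ∀ k, -b k < m) : IsExponentialOrder (gammaQuotientKernel a b) m :=
  .sum fun k _ ↦ (isExponentialOrder_gaussKernel hm (hb k)).sub
    (isExponentialOrder_gaussKernel hm (ha k))

theorem differentiableAt_gammaQuotient (b : ι → ℝ) (hs : ∀ k, 0 < s.re + a k) :
    DifferentiableAt ℂ (gammaQuotient a b) s := by
  unfold gammaQuotient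
  simp only [div_eq_mul_inv, ← Finset.prod_inv_distrib]
  refine .mul (.fun_finsetProd fun k _ ↦ differentiableAt_Gamma_add (hs k))
    (.fun_finsetProd fun k _ ↦ ?_)
  exact differentiableAt_comp_add_const.2 differentiable_one_div_Gamma.differentiableAt

theorem logDeriv_gammaQuotient (ha : ∀ k, 0 < s.re + a k) (hb : ∀ k, 0 < s.re + b k) :
    logDeriv (gammaQuotient a b) s = ∑ k, (digamma (s + a k) - digamma (s + b k)) := by
  have hprod {f : ι → ℝ} (hf : ∀ k, 0 < s.re + f k) :
      logDeriv (fun z ↦ ∏ k, Gamma (z + f k)) s = ∑ k, digamma (s + f k) := by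
    rw [logDeriv_prod (f := fun k z ↦ Gamma (z + f k)) (fun k _ ↦ Gamma_add_ne_zero (hf k))
      fun k _ ↦ differentiableAt_Gamma_add (hf k)]
    simp only [logDeriv_Gamma_add]
  have hne {f : ι → ℝ} (hf : ∀ k, 0 < s.re + f k) : ∏ k, Gamma (s + f k) ≠ 0 :=
    Finset.prod_ne_zero_iff.2 fun k _ ↦ Gamma_add_ne_zero (hf k)
  unfold gammaQuotient
  rw [logDeriv_div s (hne ha) (hne hb)
    (.fun_finsetProd fun k _ ↦ differentiableAt_Gamma_add (ha k))
    (.fun_finsetProd fun k _ ↦ differentiableAt_Gamma_add (hb k)), hprod ha, hprod hb,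
    Finset.sum_sub_distrib]

theorem gammaQuotient_ne_zero (ha : ∀ k, 0 < s.re + a k) (hb : ∀ k, 0 < s.re + b k) :
    gammaQuotient a b s ≠ 0 :=
  div_ne_zero (Finset.prod_ne_zero_iff.2 fun k _ ↦ Gamma_add_ne_zero (ha k))
    (Finset.prod_ne_zero_iff.2 fun k _ ↦ Gamma_add_ne_zero (hb k))

theorem deriv_gammaQuotient (ha : ∀ k, 0 < s.re + a k) (hb : ∀ k, 0 < s.re + b k) :
    deriv (gammaQuotient a b) s
      = (∑ k, (digamma (s + a k) - digamma (s + b k))) * gammaQuotient a b s := by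
  rw [← logDeriv_gammaQuotient ha hb, logDeriv_apply,
    div_mul_cancel₀ _ (gammaQuotient_ne_zero ha hb)]

theorem deriv_gammaQuotient_eq_neg_laplaceTransform_mul (hm : 0 < m) (ha : ∀ k, -a k < m)
    (hb : ∀ k, -b k < m) (hs : m < s.re) :
    deriv (gammaQuotient a b) s
      = -(laplaceTransform (gammaQuotientKernel a b) s * gammaQuotient a b s) := by
  have hκa (k : ι) := isExponentialOrder_gaussKernel hm (ha k)
  have hκb (k : ι) := isExponentialOrder_gaussKernel hm (hb k)
  unfold gammaQuotientKernel
  rw [deriv_gammaQuotient (fun k ↦ by linarith [ha k]) (fun k ↦ by linarith [hb k]),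
    laplaceTransform_sum (fun k _ ↦ (hκb k).sub (hκa k)) hs, ← neg_mul, ← Finset.sum_neg_distrib]
  congr 1
  refine Finset.sum_congr rfl fun k _ ↦ ?_
  rw [laplaceTransform_sub (hκb k) (hκa k) hs, ← digamma_add_sub_eq_laplaceTransform hm (ha k) hs,
    ← digamma_add_sub_eq_laplaceTransform hm (hb k) hs]
  ring

theorem log_norm_gammaQuotient (ha : ∀ k, 0 < s.re + a k) (hb : ∀ k, 0 < s.re + b k)
    (hs : 0 < s.re) :
    Real.log ‖gammaQuotient a b s‖ = ∑ k, (Real.log ‖Gamma (s + a k) / Gamma s‖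
      - Real.log ‖Gamma (s + b k) / Gamma s‖) := by
  have hne {f : ι → ℝ} (hf : ∀ k, 0 < s.re + f k) (k : ι) : ‖Gamma (s + f k)‖ ≠ 0 :=
    norm_ne_zero_iff.2 (Gamma_add_ne_zero (hf k))
  have hs0 : ‖Gamma s‖ ≠ 0 := norm_ne_zero_iff.2 (Gamma_ne_zero_of_re_pos hs)
  rw [gammaQuotient, norm_div, norm_prod, norm_prod,
    Real.log_div (Finset.prod_ne_zero_iff.2 fun k _ ↦ hne ha k)
      (Finset.prod_ne_zero_iff.2 fun k _ ↦ hne hb k),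
    Real.log_prod fun k _ ↦ hne ha k, Real.log_prod fun k _ ↦ hne hb k, ← Finset.sum_sub_distrib]
  refine Finset.sum_congr rfl fun k _ ↦ ?_
  rw [norm_div, norm_div, Real.log_div (hne ha k) hs0, Real.log_div (hne hb k) hs0,
    sub_sub_sub_cancel_right]

theorem exists_norm_gammaQuotient_le (hc : 0 < c) (ha : ∀ k, 0 < c + a k)
    (hb : ∀ k, 0 < c + b k) :
    ∃ C, ∀ s : ℂ, c ≤ s.re →
      ‖gammaQuotient a b s‖ ≤ C * ‖s‖ ^ (-∑ k, (b k - a k)) := by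
  choose Ka hKa using fun k ↦ exists_abs_log_norm_Gamma_add_sub_le hc (ha k)
  choose Kb hKb using fun k ↦ exists_abs_log_norm_Gamma_add_sub_le hc (hb k)
  refine ⟨Real.exp (∑ k, (Ka k + Kb k)), fun s hs ↦ ?_⟩
  have has (k : ι) : 0 < s.re + a k := (ha k).trans_le (by gcongr)
  have hbs (k : ι) : 0 < s.re + b k := (hb k).trans_le (by gcongr)
  have hs0 : 0 < ‖s‖ := hc.trans_le (le_norm_of_le_re hs)
  have hF : 0 < ‖gammaQuotient a b s‖ := norm_pos_iff.2 (gammaQuotient_ne_zero has hbs)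
  rw [← Real.log_le_log_iff hF (by positivity), Real.log_mul (by positivity) (by positivity),
    Real.log_exp, Real.log_rpow hs0, log_norm_gammaQuotient has hbs (hc.trans_le hs), neg_mul,
    Finset.sum_mul, ← Finset.sum_neg_distrib, ← Finset.sum_add_distrib]
  refine Finset.sum_le_sum fun k _ ↦ ?_
  linarith [(abs_le.1 (hKa k s hs)).2, (abs_le.1 (hKb k s hs)).1]

theorem exists_norm_sum_digamma_sub_le (hc : 0 < c) (ha : ∀ k, 0 < c + a k)
    (hb : ∀ k, 0 < c + b k) :
    ∃ K, 0 ≤ K ∧ ∀ s : ℂ, c ≤ s.re →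
      ‖∑ k, (digamma (s + a k) - digamma (s + b k))‖ ≤ K / ‖s‖ := by
  choose Ka hKa0 hKa using fun k ↦ exists_norm_digamma_add_sub_le hc (ha k)
  choose Kb hKb0 hKb using fun k ↦ exists_norm_digamma_add_sub_le hc (hb k)
  refine ⟨∑ k, (Ka k + Kb k), Finset.sum_nonneg fun k _ ↦ add_nonneg (hKa0 k) (hKb0 k),
    fun s hs ↦ ?_⟩
  rw [Finset.sum_div]
  refine norm_sum_le_of_le _ fun k _ ↦ ?_
  rw [← sub_sub_sub_cancel_right _ _ (digamma s), add_div]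
  exact (norm_sub_le _ _).trans (add_le_add (hKa k s hs) (hKb k s hs))

theorem exists_isHalfPlaneSymbol_gammaQuotient (hc : 0 < c) (ha : ∀ k, 0 < c + a k)
    (hb : ∀ k, 0 < c + b k) :
    ∃ C, IsHalfPlaneSymbol (gammaQuotient a b) c (∑ k, (b k - a k)) C := by
  obtain ⟨C, hF⟩ := exists_norm_gammaQuotient_le hc ha hb
  obtain ⟨K, hK, hψ⟩ := exists_norm_sum_digamma_sub_le hc ha hb
  have has {s : ℂ} (hs : c < s.re) (k : ι) : 0 < s.re + a k := (ha k).trans_le (by gcongr)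
  have hbs {s : ℂ} (hs : c < s.re) (k : ι) : 0 < s.re + b k := (hb k).trans_le (by gcongr)
  refine ⟨max C (K * C), fun s hs ↦
    (differentiableAt_gammaQuotient b (has hs)).differentiableWithinAt, fun s hs ↦ ?_,
    fun s hs ↦ ?_⟩
  · exact (hF s hs.le).trans (by gcongr; exact le_max_left _ _)
  · have hs0 : 0 < ‖s‖ := hc.trans_le (le_norm_of_le_re hs.le)
    calc ‖deriv (gammaQuotient a b) s‖
        ≤ K / ‖s‖ * (C * ‖s‖ ^ (-∑ k, (b k - a k))) := by
          rw [deriv_gammaQuotient (has hs) (hbs hs), norm_mul]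
          gcongr
          exacts [hψ s hs.le, hF s hs.le]
      _ = K * C * ‖s‖ ^ (-∑ k, (b k - a k) - 1) := by
          rw [Real.rpow_sub_one hs0.ne']
          ring
      _ ≤ _ := by gcongr; exact le_max_right _ _

theorem gammaQuotient_eq_prod_mul (hs : s.im ≠ 0) :
    gammaQuotient a b s = (∏ k, (s + b k) / (s + a k)) * gammaQuotient a b (s + 1) := by
  have hne (x : ℝ) : s + x ≠ 0 := fun h ↦ hs (by simpa using congrArg im h)
  have hprod (f : ι → ℝ) : ∏ k, Gamma (s + 1 + f k) = (∏ k, (s + f k)) * ∏ k, Gamma (s + f k) := by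
    rw [← Finset.prod_mul_distrib]
    refine Finset.prod_congr rfl fun k _ ↦ ?_
    rw [add_right_comm, Gamma_add_one _ (hne _)]
  have ha : ∏ k, (s + a k) ≠ 0 := Finset.prod_ne_zero_iff.2 fun k _ ↦ hne _
  have hb : ∏ k, (s + b k) ≠ 0 := Finset.prod_ne_zero_iff.2 fun k _ ↦ hne _
  rw [gammaQuotient, gammaQuotient, hprod, hprod, Finset.prod_div_distrib]
  field_simp

theorem tendsto_add_div_add_imAtTop (x y : ℝ) (S : Set ℝ) :
    Tendsto (fun s : ℂ ↦ (s + x) / (s + y)) (imAtTop S) (𝓝 1) := by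
  have hnorm : Tendsto (fun s : ℂ ↦ ‖s + y‖) (imAtTop S) atTop :=
    tendsto_atTop_mono (fun s ↦ by simpa using abs_im_le_norm (s + y))
      (tendsto_abs_im_imAtTop S)
  have hinv : Tendsto (fun s : ℂ ↦ 1 + (x - y) * (s + y)⁻¹) (imAtTop S) (𝓝 1) := by
    simpa using ((tendsto_inv₀_cobounded.comp
      (tendsto_norm_atTop_iff_cobounded.1 hnorm)).const_mul ((x : ℂ) - y)).const_add 1
  refine hinv.congr' ?_
  filter_upwards [hnorm.eventually_gt_atTop 0] with s hs
  have hs0 : s + y ≠ 0 := norm_pos_iff.1 hs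
  field_simp
  ring

theorem tendsto_add_one_imAtTop (c : ℝ) :
    Tendsto (fun s : ℂ ↦ s + 1) (imAtTop (Ioi (c - 1))) (imAtTop (Ioi c)) := by
  refine tendsto_inf.2 ⟨tendsto_comap_iff.2 ?_, tendsto_principal.2 ?_⟩
  · simpa [Function.comp_def] using tendsto_abs_im_imAtTop (Ioi (c - 1))
  · filter_upwards [mem_inf_of_right (mem_principal_self _)] with s hs
    simpa [sub_lt_iff_lt_add] using hs

theorem tendsto_gammaQuotient_imAtTop (hμ : 0 < ∑ k, (b k - a k)) (c : ℝ) :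
    Tendsto (gammaQuotient a b) (imAtTop (Ioi c)) (𝓝 0) := by
  obtain ⟨m, hm, ham, hbm⟩ := exists_pos_forall_neg_lt a b
  obtain ⟨C, hC⟩ := exists_isHalfPlaneSymbol_gammaQuotient hm
    (fun k ↦ neg_lt_iff_pos_add.1 (ham k)) (fun k ↦ neg_lt_iff_pos_add.1 (hbm k))
  have hn (n : ℕ) : Tendsto (gammaQuotient a b) (imAtTop (Ioi (m - n))) (𝓝 0) := by
    induction n with
    | zero => simpa using hC.tendsto_imAtTop hμ
    | succ n ih =>
      rw [Nat.cast_add_one, ← sub_sub]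
      have hfactor : Tendsto (fun s : ℂ ↦ ∏ k, (s + b k) / (s + a k))
          (imAtTop (Ioi (m - n - 1))) (𝓝 1) := by
        simpa using tendsto_finsetProd Finset.univ fun k _ ↦
          tendsto_add_div_add_imAtTop (b k) (a k) (Ioi (m - n - 1))
      have hlim := hfactor.mul (ih.comp (tendsto_add_one_imAtTop _))
      rw [mul_zero] at hlim
      refine hlim.congr' ?_
      filter_upwards [(tendsto_abs_im_imAtTop _).eventually_gt_atTop 0] with s hs
      exact (gammaQuotient_eq_prod_mul (abs_pos.1 hs)).symm
  obtain ⟨n, hcn⟩ := exists_nat_ge (m - c)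
  exact (hn n).mono_left (imAtTop_mono (Ioi_subset_Ioi (by linarith)))

end GammaQuotient

section MeijerG

variable {ι : Type*} [Fintype ι] {a b : ι → ℝ} {c x : ℝ}

theorem bromwich_gammaQuotient_eq (hx : 0 < x) (R : ℝ) :
    bromwich (gammaQuotient a b) c (-Real.log x) R
      = ∫ t in -R..R, (∏ k, Gamma ((a k : ℂ) + (c : ℂ) + (t : ℂ) * I))
          / (∏ k, Gamma ((b k : ℂ) + (c : ℂ) + (t : ℂ) * I))
          * (x : ℂ) ^ (-((c : ℂ) + (t : ℂ) * I)) := by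
  refine intervalIntegral.integral_congr fun t _ ↦ ?_
  have hpow : (x : ℂ) ^ (-((c : ℂ) + (t : ℂ) * I))
      = cexp ((c + t * I) * (-Real.log x : ℝ)) := by
    rw [cpow_def_of_ne_zero (ofReal_ne_zero.2 hx.ne'), ← ofReal_log hx.le, ofReal_neg]
    ring_nf
  simp only [gammaQuotient, hpow, add_assoc, add_comm, add_left_comm]

theorem log_mul_eq_integral_gammaQuotientKernel {g : ℝ → ℂ} (hμ : 0 < ∑ k, (b k - a k))
    (hc : ∀ k, -a k < c)
    (hg : ∀ w, 0 < w → Tendsto (bromwich (gammaQuotient a b) c w) atTop (𝓝 (g w))) {w : ℝ}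
    (hw : 0 < w) : w * g w = ∫ v in 0..w, gammaQuotientKernel a b v * g (w - v) := by
  obtain ⟨m, hm, ham, hbm⟩ := exists_pos_forall_neg_lt a b
  obtain ⟨C, hC⟩ := exists_isHalfPlaneSymbol_gammaQuotient hm
    (fun k ↦ neg_lt_iff_pos_add.1 (ham k)) (fun k ↦ neg_lt_iff_pos_add.1 (hbm k))
  set ν := min (∑ k, (b k - a k)) (1 / 2)
  set σ := max c m + 1
  have hcσ : c ≤ σ := (le_max_left c m).trans (by simp [σ])
  have hmσ : m < σ := (le_max_right c m).trans_lt (by simp [σ])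
  have hshift (w : ℝ) := tendsto_bromwich_sub_bromwich (w := w) (fun s hs ↦
    (differentiableAt_gammaQuotient b fun k ↦ neg_lt_iff_pos_add.1
      ((hc k).trans_le hs.1)).differentiableWithinAt) hcσ
    ((tendsto_gammaQuotient_imAtTop hμ (c - 1)).mono_left
      (imAtTop_mono fun y hy ↦ (sub_one_lt c).trans_le hy.1))
  refine (hC.mono hm (min_le_left _ (1 / 2))).mul_eq_integral_of_deriv_eq
    (lt_min hμ one_half_pos) ((min_le_right _ _).trans_lt one_half_lt_one) hmσ
    (isExponentialOrder_gammaQuotientKernel hm ham hbm) hmσ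
    (fun s hs ↦ deriv_gammaQuotient_eq_neg_laplaceTransform_mul hm ham hbm (hs ▸ hmσ))
    (fun w hw ↦ ?_) hw
  simpa using (hg w hw).sub (hshift w)

theorem integral_gammaQuotientKernel_mul_comp_exp (hx : x ∈ Ioo (0 : ℝ) 1) (G : ℝ → ℝ) :
    ∫ v in 0..-Real.log x, gammaQuotientKernel a b v * G (x * Real.exp v)
      = ∫ t in x..1, G t * (∑ k, ((x / t) ^ a k - (x / t) ^ b k)) / (t - x) := by
  have hsubst := intervalIntegral.integral_comp_mul_deriv_of_deriv_nonneg
    (a := 0) (b := -Real.log x) (f := fun v ↦ x * Real.exp v) (f' := fun v ↦ x * Real.exp v)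
    (g := fun t ↦ G t * (∑ k, ((x / t) ^ a k - (x / t) ^ b k)) / (t - x)) (by fun_prop)
    (fun v _ ↦ (Real.hasDerivAt_exp v).const_mul x)
    (fun v _ ↦ mul_nonneg hx.1.le (Real.exp_nonneg v))
  rw [Real.exp_zero, mul_one, Real.exp_neg, Real.exp_log hx.1, mul_inv_cancel₀ hx.1.ne'] at hsubst
  rw [← hsubst]
  refine intervalIntegral.integral_congr_ae (Eventually.of_forall fun v hv ↦ ?_)
  rw [uIoc_of_le (neg_nonneg.2 (Real.log_nonpos hx.1.le hx.2.le))] at hv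
  have hdiv : x / (x * Real.exp v) = Real.exp (-v) := by
    rw [Real.exp_neg]
    field_simp [hx.1.ne']
  have hpow (r : ℝ) : (x / (x * Real.exp v)) ^ r = Real.exp (-(r * v)) := by
    rw [hdiv, ← Real.exp_mul]
    ring_nf
  have hsub : x * Real.exp v - x = x * Real.exp v * (1 - Real.exp (-v)) := by
    rw [Real.exp_neg]
    field_simp
  have hxv : x * Real.exp v ≠ 0 := mul_ne_zero hx.1.ne' (Real.exp_ne_zero v)
  simp only [Function.comp_apply, hpow]
  rw [gammaQuotientKernel_apply, hsub, mul_comm (x * Real.exp v), ← div_div,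
    div_mul_cancel₀ _ hxv, mul_comm (G _), mul_div_right_comm]

end MeijerG

theorem stmt5_general {ι : Type*} [Fintype ι] (a b : ι → ℝ) (hμ : 0 < ∑ k, (b k - a k))
    (c : ℝ) (hc : ∀ k, -a k < c) (G : ℝ → ℝ)
    (hG : ∀ x ∈ Set.Ioo (0 : ℝ) 1,
      Tendsto (fun R : ℝ => (((2 * Real.pi)⁻¹ : ℝ) : ℂ) *
        ∫ t in -R..R,
          (∏ k, Complex.Gamma ((a k : ℂ) + (c : ℂ) + (t : ℂ) * Complex.I)) /
            (∏ k, Complex.Gamma ((b k : ℂ) + (c : ℂ) + (t : ℂ) * Complex.I)) *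
            (x : ℂ) ^ (-((c : ℂ) + (t : ℂ) * Complex.I)))
        atTop (nhds ((G x : ℂ)))) :
    ∀ x ∈ Set.Ioo (0 : ℝ) 1,
      Real.log (1 / x) * G x =
        ∫ t in x..1, G t * (∑ k, ((x / t) ^ a k - (x / t) ^ b k)) / (t - x) := by
  intro x hx
  have hlimit (w : ℝ) (hw : 0 < w) : Tendsto (bromwich (gammaQuotient a b) c w) atTop
      (𝓝 ((2 * Real.pi * G (Real.exp (-w)) : ℝ) : ℂ)) := by
    have h := (hG _ ⟨Real.exp_pos (-w), Real.exp_lt_one_iff.2 (neg_lt_zero.2 hw)⟩).const_mul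
      ((2 * Real.pi : ℝ) : ℂ)
    rw [← ofReal_mul] at h
    refine h.congr fun R ↦ ?_
    rw [← bromwich_gammaQuotient_eq (Real.exp_pos (-w)), Real.log_exp, neg_neg, ← mul_assoc,
      ← ofReal_mul, mul_inv_cancel₀ Real.two_pi_pos.ne', ofReal_one, one_mul]
  have hw : 0 < -Real.log x := neg_pos.2 (Real.log_neg hx.1 hx.2)
  have hconv := log_mul_eq_integral_gammaQuotientKernel hμ hc hlimit hw
  have hexp (v : ℝ) : Real.exp (-(-Real.log x - v)) = x * Real.exp v := by
    rw [neg_sub, sub_neg_eq_add, add_comm, Real.exp_add, Real.exp_log hx.1]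
  simp only [hexp, ← ofReal_mul, mul_left_comm _ (2 * Real.pi)] at hconv
  rw [intervalIntegral.integral_ofReal, ofReal_inj, intervalIntegral.integral_const_mul,
    neg_neg, Real.exp_log hx.1] at hconv
  rw [one_div, Real.log_inv, mul_left_cancel₀ Real.two_pi_pos.ne' hconv,
    integral_gammaQuotientKernel_mul_comp_exp hx]

end

theorem stmt5 (p : ℕ) (hp : 1 ≤ p) (a b : Fin p → ℝ)
    (ha : ∀ k, 0 ≤ a k) (hb : ∀ k, 0 ≤ b k)
    (hμ : 0 < ∑ k, (b k - a k))
    (c : ℝ) (hc : -(⨅ k, a k) < c)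
    (G : ℝ → ℝ)
    (hG : ∀ x ∈ Set.Ioo (0 : ℝ) 1,
      Tendsto (fun R : ℝ => (((2 * Real.pi)⁻¹ : ℝ) : ℂ) *
        ∫ t in -R..R,
          (∏ k, Complex.Gamma ((a k : ℂ) + (c : ℂ) + (t : ℂ) * Complex.I)) /
            (∏ k, Complex.Gamma ((b k : ℂ) + (c : ℂ) + (t : ℂ) * Complex.I)) *
            (x : ℂ) ^ (-((c : ℂ) + (t : ℂ) * Complex.I)))
        atTop (nhds ((G x : ℂ)))) :
    ∀ x ∈ Set.Ioo (0 : ℝ) 1,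
      Real.log (1 / x) * G x =
        ∫ t in x..1, G t * (∑ k, ((x / t) ^ a k - (x / t) ^ b k)) / (t - x) :=
  stmt5_general a b hμ c
    (fun k ↦ (neg_le_neg (ciInf_le (Set.finite_range a).bddBelow k)).trans_lt hc) G hG
end
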